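/- Let n ≤ m and n_1,…,n_m ≤ n be positive integers. For each 1 ≤ i ≤ m let C_i be an n_i × n real matrix and Q_i a symmetric n_i × n_i matrix with C_i C_iᵀ ≤ I_{n_i}, Q_i ≥ I_{n_i}, (I_{n_i} − C_i C_iᵀ)(Q_i − I_{n_i}) = 0, and let p_i > 0 satisfy ∑_{i=1}^m p_i C_iᵀ C_i = I_n. Then for all nonnegative functions f_i on ℝ^{n_i}, integrable with respect to γ_{n_i} and more log-convex than g_{(Q_i − I_{n_i})/(2π)}, one has ∫_{ℝⁿ} ∏_{i=1}^m f_i(C_i x)^{p_i} dγ_n(x) ≤ ∏_{i=1}^m (∫_{ℝ^{n_i}} f_i dγ_{n_i})^{p_i}. -/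

import Mathlib

open MeasureTheory Matrix
open scoped ENNReal

noncomputable section

/-- The centered Gaussian function attached to a matrix `Q` : `g_Q(x) = exp(-π⟨Qx,x⟩)`. -/
def gaussFn {k : ℕ} (Q : Matrix (Fin k) (Fin k) ℝ) (x : Fin k → ℝ) : ℝ :=
  Real.exp (-Real.pi * (Q.mulVec x ⬝ᵥ x))

/-- A nonnegative log-convex function. -/
def LogConvexFun {k : ℕ} (h : (Fin k → ℝ) → ℝ) : Prop :=
  (∀ x, 0 ≤ h x) ∧
    ∀ x y : Fin k → ℝ, ∀ a b : ℝ, 0 ≤ a → 0 ≤ b → a + b = 1 →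
      h (a • x + b • y) ≤ h x ^ a * h y ^ b

/-- `f` is more log-convex than `g_Q`, i.e. `f = g_Q · h` with `h` log-convex. -/
def MoreLogConvex {k : ℕ} (f : (Fin k → ℝ) → ℝ) (Q : Matrix (Fin k) (Fin k) ℝ) : Prop :=
  ∃ h : (Fin k → ℝ) → ℝ, LogConvexFun h ∧ f = fun x => gaussFn Q x * h x

/-- The standard Gaussian probability measure on `ℝ^k`. -/
def stdGaussian (k : ℕ) : Measure (Fin k → ℝ) :=
  volume.withDensity fun x =>
    ENNReal.ofReal ((2 * Real.pi) ^ (-(k : ℝ) / 2) * Real.exp (-(∑ i, x i ^ 2) / 2))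

/-!
Suppose first that the `Bᵢ` are coisometries with `∑ cᵢ Bᵢ* Bᵢ ≤ 1`, and let `P` be the heat
semigroup. Then `s ↦ P₁₋ₛ (∏ (Pₛ uᵢ ∘ Bᵢ) ^ cᵢ) (0)` increases from the left-hand side of the
inequality at `s = 0` to the right-hand side at `s = 1`: moving a short time `t` from the outer to
the inner semigroup changes it, to first order in `t`, by the Gaussian average of
`t / 2 * (∑ cᵢ ‖gᵢ‖² - ‖∑ cᵢ Bᵢ* gᵢ‖²) ∏ (Pₛ uᵢ ∘ Bᵢ) ^ cᵢ`, where `gᵢ = ∇ log Pₛ uᵢ ∘ Bᵢ`, and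
this is nonnegative because `∑ cᵢ Bᵢ* Bᵢ ≤ 1`. The error is `O(t ^ (3 / 2))`.

A general `Cᵢ` is dilated to the coisometries `(x, z) ↦ Cᵢ x ± Rᵢ zᵢ` with `Rᵢ Rᵢᵀ = 1 - Cᵢ Cᵢᵀ`.
Since `Rᵢᵀ (Qᵢ - 1) = 0`, the Gaussian factor of `fᵢ` at `y` is the geometric mean of its values at
`y ± Rᵢ z`, so log-convexity gives `fᵢ (y) ≤ √(fᵢ (y + Rᵢ z) fᵢ (y - Rᵢ z))`, and the two signs,
with weight `cᵢ / 2` each, make the mixed terms of `∑ cᵢ / 2 * ‖Cᵢ x ± Rᵢ zᵢ‖²` cancel. The dilated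
family thus satisfies the same condition as soon as `cᵢ ≤ 1`, which is achieved by repeating each
index.
-/

open scoped RealInnerProductSpace

local notation "𝒩" => ProbabilityTheory.stdGaussian

section ElementaryInequalities

theorem abs_exp_sub_quadratic_le (x : ℝ) :
    |Real.exp x - (1 + x + x ^ 2 / 2)| ≤ |x| ^ 3 * Real.exp |x| := by
  have h := Complex.norm_exp_sub_sum_le_norm_mul_exp x 3
  simp only [Finset.sum_range_succ, Finset.sum_range_zero, Nat.factorial, Complex.norm_real,
    Real.norm_eq_abs] at h
  rw [← Real.norm_eq_abs, ← Complex.norm_real]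
  push_cast at h ⊢
  simpa using h

theorem abs_log_sub_le {r M : ℝ} (hM : 0 < M) (hrM : M⁻¹ ≤ r) :
    |Real.log r - (r - 1)| ≤ (r - 1) ^ 2 * M := by
  have hr : 0 < r := (inv_pos.2 hM).trans_le hrM
  have h : (r - 1) ^ 2 * r⁻¹ = r - 1 - (1 - r⁻¹) := by field_simp
  calc |Real.log r - (r - 1)| = r - 1 - Real.log r := by
        rw [abs_sub_comm, abs_of_nonneg (by linarith [Real.log_le_sub_one_of_pos hr])]
    _ ≤ (r - 1) ^ 2 * r⁻¹ := by linarith [Real.one_sub_inv_le_log_of_pos hr]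
    _ ≤ (r - 1) ^ 2 * M := by
        gcongr
        exact inv_le_of_inv_le₀ hM hrM

theorem abs_log_le_mul_abs_sub_one {r M : ℝ} (hr : 0 < r) (hM : 1 ≤ M) (hrM : M⁻¹ ≤ r) :
    |Real.log r| ≤ M * |r - 1| := by
  have hinv : r⁻¹ ≤ M := inv_le_of_inv_le₀ (by linarith) hrM
  have hlow : -(M * |r - 1|) ≤ 1 - r⁻¹ := by
    have : 1 - r⁻¹ = r⁻¹ * (r - 1) := by field_simp
    rw [this]
    refine (neg_le_neg ?_).trans (neg_abs_le _)
    rw [abs_mul, abs_of_pos (inv_pos.2 hr)]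
    gcongr
  rw [abs_le]
  exact ⟨hlow.trans (Real.one_sub_inv_le_log_of_pos hr),
    (Real.log_le_sub_one_of_pos hr).trans
      ((le_abs_self _).trans (le_mul_of_one_le_left (abs_nonneg _) hM))⟩

theorem abs_log_le_of_inv_le {r M : ℝ} (hM : 0 < M) (hrM : M⁻¹ ≤ r) (hr : r ≤ M) :
    |Real.log r| ≤ M := by
  have hr0 : 0 < r := (inv_pos.2 hM).trans_le hrM
  rw [abs_le]
  exact ⟨by linarith [Real.one_sub_inv_le_log_of_pos hr0, inv_le_of_inv_le₀ hM hrM],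
    by linarith [Real.log_le_sub_one_of_pos hr0]⟩

theorem prod_rpow_eq_exp_sum_mul_log {ι : Type*} [Fintype ι] {a : ι → ℝ} (ha : ∀ i, 0 < a i)
    (c : ι → ℝ) : ∏ i, a i ^ c i = Real.exp (∑ i, c i * Real.log (a i)) := by
  rw [Real.exp_sum]
  refine Finset.prod_congr rfl fun i _ => ?_
  rw [Real.rpow_def_of_pos (ha i), mul_comm]

theorem abs_sum_mul_le {ι : Type*} [Fintype ι] {c : ι → ℝ} (hc : ∀ i, 0 ≤ c i) {g : ι → ℝ} {b : ℝ}
    (hg : ∀ i, |g i| ≤ b) : |∑ i, c i * g i| ≤ (∑ i, c i) * b := by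
  rw [Finset.sum_mul]
  refine (Finset.abs_sum_le_sum_abs _ _).trans (Finset.sum_le_sum fun i _ => ?_)
  rw [abs_mul, abs_of_nonneg (hc i)]
  exact mul_le_mul_of_nonneg_left (hg i) (hc i)

theorem add_sq_div_two_sub_le_exp_sub_one {w l t D : ℝ} (hD : |w| ≤ D) (hw : |w| ≤ t)
    (hl : |l| ≤ t) (hwl : |w - l| ≤ t ^ 2) :
    w + l ^ 2 / 2 - (Real.exp D + 1) * t ^ 3 ≤ Real.exp w - 1 := by
  have ht : 0 ≤ t := (abs_nonneg w).trans hw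
  have hexp := (abs_le.1 (abs_exp_sub_quadratic_le w)).1
  have hcube : |w| ^ 3 * Real.exp |w| ≤ t ^ 3 * Real.exp D := by gcongr
  have hsq : |l ^ 2 - w ^ 2| ≤ t ^ 2 * (t + t) := by
    rw [show l ^ 2 - w ^ 2 = (l - w) * (l + w) by ring, abs_mul, abs_sub_comm]
    exact mul_le_mul hwl ((abs_add_le _ _).trans (add_le_add hl hw)) (abs_nonneg _) (sq_nonneg t)
  linarith [(abs_le.1 hsq).2]

theorem exists_exp_sum_mul_le {ι : Type*} [Fintype ι] {c : ι → ℝ} (hc : ∀ i, 0 ≤ c i) (D : ℝ) :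
    ∃ K, 0 ≤ K ∧ ∀ (w l : ι → ℝ) (t : ℝ), 0 ≤ t → (∀ i, |w i| ≤ D) → (∀ i, |w i| ≤ t) →
      (∀ i, |l i| ≤ t) → (∀ i, |w i - l i| ≤ t ^ 2) →
      Real.exp (∑ i, c i * w i) ≤ 1 + ∑ i, c i * (Real.exp (w i) - 1) +
        ((∑ i, c i * l i) ^ 2 - ∑ i, c i * l i ^ 2) / 2 + K * t ^ 3 := by
  set s := ∑ i, c i with hs
  have hs0 : 0 ≤ s := Finset.sum_nonneg fun i _ => hc i
  refine ⟨s ^ 3 * Real.exp (s * D) + s ^ 2 + s * (Real.exp D + 1), by positivity,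
    fun w l t ht hD hw hl hwl => ?_⟩
  set W := ∑ i, c i * w i with hW
  set Λ := ∑ i, c i * l i with hΛ
  have hWD : |W| ≤ s * D := abs_sum_mul_le hc hD
  have hWt : |W| ≤ s * t := abs_sum_mul_le hc hw
  have hΛt : |Λ| ≤ s * t := abs_sum_mul_le hc hl
  have hWΛ : |W - Λ| ≤ s * t ^ 2 := by
    rw [hW, hΛ, ← Finset.sum_sub_distrib]
    simp only [← mul_sub]
    exact abs_sum_mul_le hc hwl
  have hexp := (abs_le.1 (abs_exp_sub_quadratic_le W)).2
  have hcube : |W| ^ 3 * Real.exp |W| ≤ (s * t) ^ 3 * Real.exp (s * D) := by gcongr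
  have hsq : |W ^ 2 - Λ ^ 2| ≤ s * t ^ 2 * (s * t + s * t) := by
    rw [show W ^ 2 - Λ ^ 2 = (W - Λ) * (W + Λ) by ring, abs_mul]
    exact mul_le_mul hWΛ ((abs_add_le _ _).trans (add_le_add hWt hΛt)) (abs_nonneg _)
      (by positivity)
  have hlin : W + (∑ i, c i * l i ^ 2) / 2 - s * ((Real.exp D + 1) * t ^ 3) ≤
      ∑ i, c i * (Real.exp (w i) - 1) := by
    rw [hW, hs, Finset.sum_div, Finset.sum_mul, ← Finset.sum_add_distrib,
      ← Finset.sum_sub_distrib]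
    refine Finset.sum_le_sum fun i _ => ?_
    have := mul_le_mul_of_nonneg_left
      (add_sq_div_two_sub_le_exp_sub_one (hD i) (hw i) (hl i) (hwl i)) (hc i)
    linarith
  linarith [(abs_le.1 hsq).2]

theorem abs_div_le_mul_of_inv_le {x y z L : ℝ} (hL : 0 < L) (hx : |x| ≤ z) (hy : L⁻¹ ≤ y) :
    |x / y| ≤ z * L := by
  have hy0 : 0 < y := (inv_pos.2 hL).trans_le hy
  rw [abs_div, abs_of_pos hy0, div_eq_mul_inv]
  exact mul_le_mul hx (inv_le_of_inv_le₀ hL hy) (by positivity) ((abs_nonneg x).trans hx)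

theorem abs_log_sub_le_of_abs_sub_one_le {r l L δ : ℝ} (hL : 1 ≤ L) (hr : (L ^ 2)⁻¹ ≤ r)
    (hδ : |r - 1| ≤ 2 * L ^ 2 * δ) (hl : |r - 1 - l| ≤ 2 * L ^ 2 * δ ^ 2) :
    |Real.log r - l| ≤ (6 * L ^ 6 * δ) ^ 2 := by
  have hL6 : 1 ≤ L ^ 6 := one_le_pow₀ hL
  have hsq : (r - 1) ^ 2 ≤ (2 * L ^ 2 * δ) ^ 2 :=
    sq_le_sq' (neg_le_of_abs_le hδ) (le_of_abs_le hδ)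
  calc |Real.log r - l| ≤ (r - 1) ^ 2 * L ^ 2 + 2 * L ^ 2 * δ ^ 2 :=
        (abs_sub_le _ _ _).trans (add_le_add (abs_log_sub_le (by positivity) hr) hl)
    _ ≤ (2 * L ^ 2 * δ) ^ 2 * L ^ 2 + 2 * L ^ 6 * δ ^ 2 := by
        gcongr
        norm_num
    _ = 6 * L ^ 6 * δ ^ 2 := by ring
    _ ≤ (6 * L ^ 6) ^ 2 * δ ^ 2 := by
        gcongr
        exact le_self_pow₀ (by linarith) two_ne_zero
    _ = (6 * L ^ 6 * δ) ^ 2 := by ring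

/-- Here `a` and `b` stand for the values of a function at two points at distance at most `δ`, `U`
for its Gaussian average around the first point, and `l` for its linearised increment. -/
theorem abs_log_div_sub_le {L a b U l δ : ℝ} (hL : 1 ≤ L) (hb : L⁻¹ ≤ b) (hbL : b ≤ L)
    (hU : L⁻¹ ≤ U) (hUL : U ≤ L) (haU : |a - U| ≤ L * δ) (haU' : |a - U| ≤ L * δ ^ 2)
    (hba : |b - a| ≤ L * δ) (hbl : |b - a - l| ≤ L * δ ^ 2) (hl : |l| ≤ L * δ) :
    |Real.log (b / U)| ≤ L ^ 2 ∧ |Real.log (b / U)| ≤ 6 * L ^ 6 * δ ∧ |l / U| ≤ 6 * L ^ 6 * δ ∧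
      |Real.log (b / U) - l / U| ≤ (6 * L ^ 6 * δ) ^ 2 := by
  have hL0 : 0 < L := by linarith
  have hU0 : 0 < U := (inv_pos.2 hL0).trans_le hU
  have hb0 : 0 < b := (inv_pos.2 hL0).trans_le hb
  have hUinv : U⁻¹ ≤ L := inv_le_of_inv_le₀ hL0 hU
  have hδ : 0 ≤ δ := nonneg_of_mul_nonneg_right ((abs_nonneg _).trans hl) hL0
  have hr : b / U ≤ L ^ 2 := by
    rw [div_eq_mul_inv, sq]
    gcongr
  have hr' : (L ^ 2)⁻¹ ≤ b / U := by
    rw [sq, mul_inv, div_eq_mul_inv]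
    gcongr
  have hρ : |b / U - 1| ≤ 2 * L ^ 2 * δ := by
    rw [div_sub_one hU0.ne']
    refine (abs_div_le_mul_of_inv_le (z := 2 * L * δ) hL0 ?_ hU).trans_eq (by ring)
    linarith [abs_sub_le b a U]
  have hρl : |b / U - 1 - l / U| ≤ 2 * L ^ 2 * δ ^ 2 := by
    rw [div_sub_one hU0.ne', ← sub_div]
    refine (abs_div_le_mul_of_inv_le (z := 2 * L * δ ^ 2) hL0 ?_ hU).trans_eq (by ring)
    have := abs_add_le (b - a - l) (a - U)
    rw [show b - a - l + (a - U) = b - U - l by ring] at this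
    linarith
  refine ⟨abs_log_le_of_inv_le (by positivity) hr' hr, ?_, ?_,
    abs_log_sub_le_of_abs_sub_one_le hL hr' hρ hρl⟩
  · calc |Real.log (b / U)| ≤ L ^ 2 * |b / U - 1| :=
          abs_log_le_mul_abs_sub_one (by positivity) (one_le_pow₀ hL) hr'
      _ ≤ L ^ 2 * (2 * L ^ 2 * δ) := by gcongr
      _ = 2 * L ^ 4 * δ := by ring
      _ ≤ 6 * L ^ 6 * δ := by gcongr <;> norm_num
  · calc |l / U| ≤ L * δ * L := abs_div_le_mul_of_inv_le hL0 hl hU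
      _ = 1 * L ^ 2 * δ := by ring
      _ ≤ 6 * L ^ 6 * δ := by gcongr <;> norm_num

end ElementaryInequalities

section Heat

variable {E : Type*} [NormedAddCommGroup E] [InnerProductSpace ℝ E] [FiniteDimensional ℝ E]
  [MeasurableSpace E] [BorelSpace E]

theorem integrable_norm_pow_stdGaussian (k : ℕ) : Integrable (fun z : E => ‖z‖ ^ k) (𝒩 E) :=
  (ProbabilityTheory.IsGaussian.memLp_id (𝒩 E) (k : ℝ≥0∞) (by simp)).integrable_norm_pow'

theorem integrable_inner_stdGaussian (w : E) : Integrable (fun z => ⟪w, z⟫) (𝒩 E) :=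
  (ProbabilityTheory.IsGaussian.integrable_id (μ := 𝒩 E)).const_inner w

theorem integral_inner_stdGaussian (w : E) : ∫ z, ⟪w, z⟫ ∂𝒩 E = 0 :=
  ProbabilityTheory.integral_strongDual_stdGaussian (innerSL ℝ w)

theorem integrable_inner_sq_stdGaussian (w : E) : Integrable (fun z => ⟪w, z⟫ ^ 2) (𝒩 E) :=
  ((ProbabilityTheory.IsGaussian.memLp_two_id (μ := 𝒩 E)).const_inner w).integrable_sq

theorem integral_inner_sq_stdGaussian (w : E) : ∫ z, ⟪w, z⟫ ^ 2 ∂𝒩 E = ‖w‖ ^ 2 := by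
  have h := ProbabilityTheory.variance_dual_stdGaussian (innerSL ℝ w)
  rw [ProbabilityTheory.variance_of_integral_eq_zero (by fun_prop)
    (ProbabilityTheory.integral_strongDual_stdGaussian _)] at h
  simpa using h

theorem conv_map_sqrt_smul_stdGaussian {s t : ℝ} (hs : 0 ≤ s) (ht : 0 ≤ t) :
    (𝒩 E).map (√s • ·) ∗ (𝒩 E).map (√t • ·) = (𝒩 E).map (√(s + t) • ·) := by
  have (r : ℝ) : IsProbabilityMeasure ((𝒩 E).map (r • ·)) :=
    Measure.isProbabilityMeasure_map (by fun_prop)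
  apply Measure.ext_of_charFun
  ext ξ
  simp only [charFun_conv, charFun_map_smul, ProbabilityTheory.charFun_stdGaussian, norm_smul,
    Real.norm_eq_abs, ← Complex.exp_add]
  congr 1
  norm_cast
  rw [mul_pow, mul_pow, mul_pow, sq_abs, sq_abs, sq_abs, Real.sq_sqrt hs, Real.sq_sqrt ht,
    Real.sq_sqrt (add_nonneg hs ht)]
  ring

/-- The heat semigroup on `E`, with generator half the Laplacian: `heat t u x` is the mean of
`u (x + √t Z)` for a standard Gaussian `Z`. The values of `u` are vectors, so that gradients can
be averaged too. -/
def heat {X : Type*} [NormedAddCommGroup X] [NormedSpace ℝ X] (t : ℝ) (u : E → X) (x : E) : X :=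
  ∫ z, u (x + √t • z) ∂𝒩 E

section

variable {X : Type*} [NormedAddCommGroup X]

theorem integrable_comp_add_smul {u : E → X} {M : ℝ} (hu : Continuous u) (hM : ∀ x, ‖u x‖ ≤ M)
    (r : ℝ) (x : E) : Integrable (fun z => u (x + r • z)) (𝒩 E) :=
  Integrable.of_bound (C := M) (by fun_prop) (.of_forall fun z => hM _)

variable [NormedSpace ℝ X]

theorem continuous_heat {u : E → X} {M : ℝ} (hu : Continuous u) (hM : ∀ x, ‖u x‖ ≤ M) (t : ℝ) :
    Continuous (heat t u) :=
  continuous_of_dominated (bound := fun _ => M)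
    (fun x => (integrable_comp_add_smul hu hM √t x).aestronglyMeasurable)
    (fun _ => .of_forall fun _ => hM _) (integrable_const _) (.of_forall fun _ => by fun_prop)

theorem norm_heat_le {u : E → X} {M : ℝ} (hM : ∀ x, ‖u x‖ ≤ M) (t : ℝ) (x : E) :
    ‖heat t u x‖ ≤ M := by
  simpa [heat] using norm_integral_le_of_norm_le_const (μ := 𝒩 E)
    (f := fun z => u (x + √t • z)) (.of_forall fun z => hM _)

theorem heat_heat {u : E → X} {M : ℝ} (hu : Continuous u) (hM : ∀ x, ‖u x‖ ≤ M)
    {s t : ℝ} (hs : 0 ≤ s) (ht : 0 ≤ t) : heat s (heat t u) = heat (s + t) u := by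
  have (r : ℝ) : IsProbabilityMeasure ((𝒩 E).map (r • ·)) :=
    Measure.isProbabilityMeasure_map (by fun_prop)
  ext x
  have hconv := integral_conv (μ := (𝒩 E).map (√s • ·)) (ν := (𝒩 E).map (√t • ·))
    (f := fun y => u (x + y)) (.of_bound (C := M) (by fun_prop) (.of_forall fun _ => hM _))
  have hinner (y : E) : ∫ z, u (x + (y + z)) ∂(𝒩 E).map (√t • ·) = heat t u (x + y) := by
    rw [integral_map (by fun_prop) (by fun_prop)]
    simp only [heat, add_assoc]
  have hcont := continuous_heat hu hM t
  simp only [hinner] at hconv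
  rw [conv_map_sqrt_smul_stdGaussian hs ht, integral_map (by fun_prop) (by fun_prop),
    integral_map (by fun_prop) (by fun_prop)] at hconv
  exact hconv.symm

end

theorem heat_zero (u : E → ℝ) : heat 0 u = u := by
  ext x
  simp [heat]

theorem heat_le_heat_add {u v : E → ℝ} {M M' ε : ℝ} (hu : Continuous u) (hv : Continuous v)
    (huM : ∀ x, ‖u x‖ ≤ M) (hvM : ∀ x, ‖v x‖ ≤ M') (h : ∀ x, u x ≤ v x + ε) (t : ℝ) (x : E) :
    heat t u x ≤ heat t v x + ε := by
  have hint := integrable_comp_add_smul hv hvM √t x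
  calc heat t u x ≤ ∫ z, (v (x + √t • z) + ε) ∂𝒩 E :=
        integral_mono (integrable_comp_add_smul hu huM √t x) (hint.add (integrable_const ε))
          fun z => h _
    _ = heat t v x + ε := by simp [integral_add hint (integrable_const ε), heat]

end Heat

section Coisometry

variable {E F : Type*} [NormedAddCommGroup E] [InnerProductSpace ℝ E] [FiniteDimensional ℝ E]
  [NormedAddCommGroup F] [InnerProductSpace ℝ F] [FiniteDimensional ℝ F]

theorem norm_apply_le_of_norm_adjoint_le {B : E →L[ℝ] F} (hB : ∀ y, ‖B.adjoint y‖ ≤ ‖y‖) (x : E) :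
    ‖B x‖ ≤ ‖x‖ := by
  have hnorm : ‖B‖ ≤ 1 := by
    rw [← (ContinuousLinearMap.adjoint (𝕜 := ℝ) (E := E) (F := F)).norm_map B]
    exact ContinuousLinearMap.opNorm_le_bound _ zero_le_one fun y => by simpa using hB y
  simpa using B.le_of_opNorm_le hnorm x

/-- This is `‖T‖ ≤ 1 ↔ ‖T*‖ ≤ 1` for the map `T x = (√cᵢ Bᵢ x)ᵢ`. -/
theorem norm_sum_smul_adjoint_sq_le {ι : Type*} [Fintype ι] {F : ι → Type*}
    [∀ i, NormedAddCommGroup (F i)] [∀ i, InnerProductSpace ℝ (F i)]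
    [∀ i, FiniteDimensional ℝ (F i)] (B : ∀ i, E →L[ℝ] F i) {c : ι → ℝ} (hc : ∀ i, 0 ≤ c i)
    (hsum : ∀ x, ∑ i, c i * ‖B i x‖ ^ 2 ≤ ‖x‖ ^ 2) (y : ∀ i, F i) :
    ‖∑ i, c i • (B i).adjoint (y i)‖ ^ 2 ≤ ∑ i, c i * ‖y i‖ ^ 2 := by
  set w := ∑ i, c i • (B i).adjoint (y i) with hw
  have hww : ‖w‖ ^ 2 = ∑ i, c i * ⟪y i, B i w⟫ := by
    rw [← real_inner_self_eq_norm_sq]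
    nth_rewrite 1 [hw]
    simp only [sum_inner, real_inner_smul_left, ContinuousLinearMap.adjoint_inner_left]
  have hnonneg : 0 ≤ ∑ i, c i * ‖y i - B i w‖ ^ 2 :=
    Finset.sum_nonneg fun i _ => mul_nonneg (hc i) (sq_nonneg _)
  have hexpand : ∑ i, c i * ‖y i - B i w‖ ^ 2 =
      ∑ i, c i * ‖y i‖ ^ 2 - 2 * ∑ i, c i * ⟪y i, B i w⟫ + ∑ i, c i * ‖B i w‖ ^ 2 := by
    rw [Finset.mul_sum, ← Finset.sum_sub_distrib, ← Finset.sum_add_distrib]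
    refine Finset.sum_congr rfl fun i _ => ?_
    rw [norm_sub_sq_real]
    ring
  linarith [hsum w]

variable [MeasurableSpace E] [BorelSpace E] [MeasurableSpace F] [BorelSpace F]

theorem map_stdGaussian_of_norm_adjoint_eq {B : E →L[ℝ] F} (hB : ∀ y, ‖B.adjoint y‖ = ‖y‖) :
    (𝒩 E).map B = 𝒩 F := by
  have : IsProbabilityMeasure ((𝒩 E).map B) := Measure.isProbabilityMeasure_map (by fun_prop)
  apply Measure.ext_of_charFun
  ext ξ
  have hmap : charFun ((𝒩 E).map B) ξ = charFun (𝒩 E) (B.adjoint ξ) := by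
    rw [charFun_apply, charFun_apply, integral_map (by fun_prop) (by fun_prop)]
    simp only [ContinuousLinearMap.adjoint_inner_right]
  rw [hmap, ProbabilityTheory.charFun_stdGaussian, ProbabilityTheory.charFun_stdGaussian, hB]

theorem heat_comp {X : Type*} [NormedAddCommGroup X] [NormedSpace ℝ X] {B : E →L[ℝ] F}
    (hB : ∀ y, ‖B.adjoint y‖ = ‖y‖) {u : F → X} (hu : Continuous u) (t : ℝ) (x : E) :
    heat t (fun y => u (B y)) x = heat t u (B x) := by
  simp only [heat, ← map_stdGaussian_of_norm_adjoint_eq hB]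
  rw [integral_map (by fun_prop) (by fun_prop)]
  simp

end Coisometry

/-- A positive function with quantitative `C^{1,1}` control: `u` takes values in `[L⁻¹, L]`, is
`L`-Lipschitz, and its first order Taylor remainder with gradient `G` is at most `L ‖v‖ ^ 2`. All
bounds share the constant `L`, and they are preserved by the heat semigroup. -/
structure RegularPos {E : Type*} [NormedAddCommGroup E] [InnerProductSpace ℝ E]
    (L : ℝ) (u : E → ℝ) (G : E → E) : Prop where
  one_le : 1 ≤ L
  inv_le_apply : ∀ x, L⁻¹ ≤ u x
  apply_le : ∀ x, u x ≤ L
  continuous_grad : Continuous G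
  norm_grad_le : ∀ x, ‖G x‖ ≤ L
  abs_sub_le : ∀ x v, |u (x + v) - u x| ≤ L * ‖v‖
  abs_remainder_le : ∀ x v, |u (x + v) - u x - ⟪G x, v⟫| ≤ L * ‖v‖ ^ 2

namespace RegularPos

section

variable {E : Type*} [NormedAddCommGroup E] [InnerProductSpace ℝ E] {L : ℝ} {u : E → ℝ} {G : E → E}

theorem bound_pos (h : RegularPos L u G) : 0 < L :=
  one_pos.trans_le h.one_le

theorem apply_pos (h : RegularPos L u G) (x : E) : 0 < u x :=
  (inv_pos.2 h.bound_pos).trans_le (h.inv_le_apply x)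

theorem norm_apply_le (h : RegularPos L u G) (x : E) : ‖u x‖ ≤ L := by
  rw [Real.norm_of_nonneg (h.apply_pos x).le]
  exact h.apply_le x

theorem continuous (h : RegularPos L u G) : Continuous u := by
  refine (LipschitzWith.of_dist_le' (K := L) fun x y => ?_).continuous
  simpa [Real.dist_eq, dist_eq_norm] using h.abs_sub_le y (x - y)

theorem mono (h : RegularPos L u G) {L' : ℝ} (hL : L ≤ L') : RegularPos L' u G where
  one_le := h.one_le.trans hL
  inv_le_apply x := (inv_anti₀ h.bound_pos hL).trans (h.inv_le_apply x)
  apply_le x := (h.apply_le x).trans hL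
  continuous_grad := h.continuous_grad
  norm_grad_le x := (h.norm_grad_le x).trans hL
  abs_sub_le x v := (h.abs_sub_le x v).trans (by gcongr)
  abs_remainder_le x v := (h.abs_remainder_le x v).trans (by gcongr)

theorem continuous_prod_rpow {ι : Type*} [Fintype ι] {u : ι → E → ℝ} {G : ι → E → E}
    (hu : ∀ i, RegularPos L (u i) (G i)) (c : ι → ℝ) : Continuous fun x => ∏ i, u i x ^ c i :=
  continuous_finsetProd _ fun i _ => (hu i).continuous.rpow_const fun x =>
    .inl ((hu i).apply_pos x).ne'

theorem norm_prod_rpow_le {ι : Type*} [Fintype ι] {u : ι → E → ℝ} {G : ι → E → E}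
    (hu : ∀ i, RegularPos L (u i) (G i)) {c : ι → ℝ} (hc : ∀ i, 0 ≤ c i) (x : E) :
    ‖∏ i, u i x ^ c i‖ ≤ ∏ i, L ^ c i := by
  have hnonneg (i : ι) : 0 ≤ u i x ^ c i := Real.rpow_nonneg ((hu i).apply_pos x).le _
  rw [Real.norm_of_nonneg (Finset.prod_nonneg fun i _ => hnonneg i)]
  exact Finset.prod_le_prod (fun i _ => hnonneg i)
    fun i _ => Real.rpow_le_rpow ((hu i).apply_pos x).le ((hu i).apply_le x) (hc i)

theorem comp {F : Type*} [NormedAddCommGroup F] [InnerProductSpace ℝ F] [FiniteDimensional ℝ E]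
    [FiniteDimensional ℝ F] {u : F → ℝ} {G : F → F} (h : RegularPos L u G) {B : E →L[ℝ] F}
    (hB : ∀ y, ‖B.adjoint y‖ ≤ ‖y‖) :
    RegularPos L (fun x => u (B x)) (fun x => B.adjoint (G (B x))) where
  one_le := h.one_le
  inv_le_apply x := h.inv_le_apply _
  apply_le x := h.apply_le _
  continuous_grad := B.adjoint.continuous.comp (h.continuous_grad.comp B.continuous)
  norm_grad_le x := (hB _).trans (h.norm_grad_le _)
  abs_sub_le x v := by
    have := h.bound_pos
    rw [map_add]
    exact (h.abs_sub_le _ _).trans (by gcongr; exact norm_apply_le_of_norm_adjoint_le hB v)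
  abs_remainder_le x v := by
    have := h.bound_pos
    rw [ContinuousLinearMap.adjoint_inner_left, map_add]
    exact (h.abs_remainder_le _ _).trans (by gcongr; exact norm_apply_le_of_norm_adjoint_le hB v)

end

section Heat

variable {E : Type*} [NormedAddCommGroup E] [InnerProductSpace ℝ E] [FiniteDimensional ℝ E]
  [MeasurableSpace E] [BorelSpace E] {L : ℝ} {u : E → ℝ} {G : E → E}

theorem regularPos_heat (h : RegularPos L u G) (t : ℝ) : RegularPos L (heat t u) (heat t G) := by
  have hint (x : E) := integrable_comp_add_smul h.continuous h.norm_apply_le √t x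
  have hint_add (x v : E) : Integrable (fun z => u (x + √t • z + v)) (𝒩 E) := by
    simpa only [add_right_comm x v] using hint (x + v)
  have hintG (x : E) := integrable_comp_add_smul h.continuous_grad h.norm_grad_le √t x
  have hsub (x v : E) : heat t u (x + v) - heat t u x =
      ∫ z, (u (x + √t • z + v) - u (x + √t • z)) ∂𝒩 E := by
    rw [integral_sub (hint_add x v) (hint x)]
    simp only [heat, add_right_comm x v]
  have hinner (x v : E) : ⟪heat t G x, v⟫ = ∫ z, ⟪G (x + √t • z), v⟫ ∂𝒩 E := by
    rw [heat, real_inner_comm, ← integral_inner (hintG x)]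
    simp only [real_inner_comm]
  refine ⟨h.one_le, fun x => ?_, fun x => (le_abs_self _).trans (norm_heat_le h.norm_apply_le t x),
    continuous_heat h.continuous_grad h.norm_grad_le t, norm_heat_le h.norm_grad_le t,
    fun x v => ?_, fun x v => ?_⟩
  · simpa [heat] using integral_mono (integrable_const L⁻¹) (hint x) fun z => h.inv_le_apply _
  · rw [hsub, ← Real.norm_eq_abs]
    simpa using norm_integral_le_of_norm_le_const (μ := 𝒩 E)
      (.of_forall fun z => (Real.norm_eq_abs _).trans_le (h.abs_sub_le (x + √t • z) v))
  · rw [hsub, hinner, ← integral_sub (by exact (hint_add x v).sub (hint x))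
      ((hintG x).inner_const v), ← Real.norm_eq_abs]
    simpa using norm_integral_le_of_norm_le_const (μ := 𝒩 E)
      (.of_forall fun z => (Real.norm_eq_abs _).trans_le (h.abs_remainder_le (x + √t • z) v))

theorem abs_sub_heat_le (h : RegularPos L u G) (t : ℝ) (x : E) :
    |u x - heat t u x| ≤ L * (√t * ∫ z, ‖z‖ ^ 1 ∂𝒩 E) := by
  have hint := integrable_comp_add_smul h.continuous h.norm_apply_le √t x
  have hsub : heat t u x - u x = ∫ z, (u (x + √t • z) - u x) ∂𝒩 E := by
    simp [integral_sub hint (integrable_const _), heat]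
  rw [abs_sub_comm, hsub, ← Real.norm_eq_abs, ← integral_const_mul, ← integral_const_mul]
  refine norm_integral_le_of_norm_le (((integrable_norm_pow_stdGaussian 1).const_mul _).const_mul _)
    (.of_forall fun z => (h.abs_sub_le x _).trans_eq ?_)
  rw [norm_smul, Real.norm_of_nonneg (Real.sqrt_nonneg t), pow_one]

theorem abs_sub_heat_le_sq (h : RegularPos L u G) (t : ℝ) (x : E) :
    |u x - heat t u x| ≤ L * (√t ^ 2 * ∫ z, ‖z‖ ^ 2 ∂𝒩 E) := by
  have hint := integrable_comp_add_smul h.continuous h.norm_apply_le √t x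
  have hint_inner : Integrable (fun z => ⟪G x, √t • z⟫) (𝒩 E) := by
    simpa only [real_inner_smul_right] using (integrable_inner_stdGaussian (G x)).const_mul √t
  have hsub : heat t u x - u x = ∫ z, (u (x + √t • z) - u x - ⟪G x, √t • z⟫) ∂𝒩 E := by
    rw [integral_sub (by exact hint.sub (integrable_const _)) hint_inner,
      integral_sub hint (integrable_const _)]
    simp [real_inner_smul_right, integral_const_mul, integral_inner_stdGaussian, heat]
  rw [abs_sub_comm, hsub, ← Real.norm_eq_abs, ← integral_const_mul, ← integral_const_mul]
  refine norm_integral_le_of_norm_le (((integrable_norm_pow_stdGaussian 2).const_mul _).const_mul _)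
    (.of_forall fun z => (h.abs_remainder_le x _).trans_eq ?_)
  rw [norm_smul, Real.norm_of_nonneg (Real.sqrt_nonneg t), mul_pow]

theorem integrable_div_heat_sub_one (h : RegularPos L u G) (t : ℝ) (x : E) :
    Integrable (fun z => u (x + √t • z) / heat t u x - 1) (𝒩 E) :=
  ((integrable_comp_add_smul h.continuous h.norm_apply_le √t x).div_const _).sub
    (integrable_const 1)

theorem integral_div_heat_sub_one (h : RegularPos L u G) (t : ℝ) (x : E) :
    ∫ z, (u (x + √t • z) / heat t u x - 1) ∂𝒩 E = 0 := by
  have hint := integrable_comp_add_smul h.continuous h.norm_apply_le √t x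
  rw [integral_sub (hint.div_const _) (integrable_const 1), integral_div, ← heat,
    div_self ((h.regularPos_heat t).apply_pos x).ne']
  simp

end Heat

end RegularPos

section HeatStep

variable {E : Type*} [NormedAddCommGroup E] [InnerProductSpace ℝ E] [FiniteDimensional ℝ E]
  [MeasurableSpace E] [BorelSpace E] {ι : Type*} [Fintype ι]

theorem RegularPos.abs_log_div_heat_le {L : ℝ} {u : E → ℝ} {G : E → E}
    (h : RegularPos L u G) {t δ : ℝ} (hδ₁ : √t * ∫ z : E, ‖z‖ ^ 1 ∂𝒩 E ≤ δ)
    (hδ₂ : √t ^ 2 * ∫ z : E, ‖z‖ ^ 2 ∂𝒩 E ≤ δ ^ 2)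
    (x : E) {v : E} (hv : ‖v‖ ≤ δ) :
    |Real.log (u (x + v) / heat t u x)| ≤ L ^ 2 ∧
      |Real.log (u (x + v) / heat t u x)| ≤ 6 * L ^ 6 * δ ∧
      |⟪G x, v⟫ / heat t u x| ≤ 6 * L ^ 6 * δ ∧
      |Real.log (u (x + v) / heat t u x) - ⟪G x, v⟫ / heat t u x| ≤ (6 * L ^ 6 * δ) ^ 2 := by
  have hL := h.bound_pos
  have hU := h.regularPos_heat t
  refine abs_log_div_sub_le (a := u x) h.one_le (h.inv_le_apply _) (h.apply_le _)
    (hU.inv_le_apply x) (hU.apply_le x) ((h.abs_sub_heat_le t x).trans ?_)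
    ((h.abs_sub_heat_le_sq t x).trans ?_) ((h.abs_sub_le x v).trans ?_)
    ((h.abs_remainder_le x v).trans ?_) ((abs_real_inner_le_norm _ _).trans ?_)
  any_goals gcongr
  exact h.norm_grad_le x

theorem exists_prod_div_heat_rpow_le {c : ι → ℝ} (hc : ∀ i, 0 ≤ c i) (L : ℝ) :
    ∃ K m, 0 ≤ K ∧ 0 ≤ m ∧ ∀ (u : ι → E → ℝ) (G : ι → E → E), (∀ i, RegularPos L (u i) (G i)) →
      ∀ t, 0 ≤ t → ∀ x z,
        ∏ i, (u i (x + √t • z) / heat t (u i) x) ^ c i ≤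
          1 + ∑ i, c i * (u i (x + √t • z) / heat t (u i) x - 1) +
            t / 2 * (⟪∑ i, c i • (heat t (u i) x)⁻¹ • G i x, z⟫ ^ 2 -
              ∑ i, c i * ⟪(heat t (u i) x)⁻¹ • G i x, z⟫ ^ 2) +
            K * √t ^ 3 * (‖z‖ + m) ^ 3 := by
  obtain ⟨K, hK, hexp⟩ := exists_exp_sum_mul_le hc (L ^ 2)
  set m₁ := ∫ z : E, ‖z‖ ^ 1 ∂𝒩 E
  set m₂ := ∫ z : E, ‖z‖ ^ 2 ∂𝒩 E
  have hm₁ : 0 ≤ m₁ := integral_nonneg fun z => by positivity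
  have hm₂ : 0 ≤ m₂ := integral_nonneg fun z => by positivity
  refine ⟨K * (6 * L ^ 6) ^ 3, 1 + m₁ + m₂, by positivity, by positivity,
    fun u G hu t ht x z => ?_⟩
  set U : ι → ℝ := fun i => heat t (u i) x
  set δ := √t * (‖z‖ + (1 + m₁ + m₂)) with hδ
  have hδ₁ : √t * m₁ ≤ δ := by
    rw [hδ]
    gcongr
    linarith [norm_nonneg z]
  have hδ₂ : √t ^ 2 * m₂ ≤ δ ^ 2 := by
    rw [hδ, mul_pow]
    gcongr
    nlinarith [norm_nonneg z]
  have hv : ‖√t • z‖ ≤ δ := by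
    rw [norm_smul, Real.norm_of_nonneg (Real.sqrt_nonneg t), hδ]
    gcongr
    linarith
  have hratio (i : ι) : 0 < u i (x + √t • z) / U i :=
    div_pos ((hu i).apply_pos _) (((hu i).regularPos_heat t).apply_pos x)
  have hbounds (i : ι) := (hu i).abs_log_div_heat_le hδ₁ hδ₂ x hv
  have hmain := hexp (fun i => Real.log (u i (x + √t • z) / U i)) (fun i => ⟪G i x, √t • z⟫ / U i)
    (6 * L ^ 6 * δ) (by positivity) (fun i => (hbounds i).1) (fun i => (hbounds i).2.1)
    (fun i => (hbounds i).2.2.1) fun i => (hbounds i).2.2.2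
  have hinner (i : ι) : ⟪G i x, √t • z⟫ / U i = √t * ⟪(U i)⁻¹ • G i x, z⟫ := by
    rw [real_inner_smul_right, real_inner_smul_left]
    ring
  calc ∏ i, (u i (x + √t • z) / U i) ^ c i
      = Real.exp (∑ i, c i * Real.log (u i (x + √t • z) / U i)) :=
        prod_rpow_eq_exp_sum_mul_log hratio c
    _ ≤ _ := hmain
    _ = _ := by
        simp only [Real.exp_log (hratio _), hinner, sum_inner,
          real_inner_smul_left (F := E) _ _ (c _)]
        simp only [mul_left_comm _ √t, ← Finset.mul_sum, mul_pow, Real.sq_sqrt ht, hδ,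
          mul_left_comm _ t]
        ring

theorem integrable_inner_sq_sub_sum_inner_sq (c : ι → ℝ) (w : E) (g : ι → E) :
    Integrable (fun z => ⟪w, z⟫ ^ 2 - ∑ i, c i * ⟪g i, z⟫ ^ 2) (𝒩 E) :=
  (integrable_inner_sq_stdGaussian w).sub
    (integrable_finsetSum _ fun i _ => (integrable_inner_sq_stdGaussian (g i)).const_mul (c i))

theorem integral_inner_sq_sub_sum_inner_sq (c : ι → ℝ) (w : E) (g : ι → E) :
    ∫ z, (⟪w, z⟫ ^ 2 - ∑ i, c i * ⟪g i, z⟫ ^ 2) ∂𝒩 E = ‖w‖ ^ 2 - ∑ i, c i * ‖g i‖ ^ 2 := by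
  have hint (i : ι) := (integrable_inner_sq_stdGaussian (g i)).const_mul (c i)
  rw [integral_sub (integrable_inner_sq_stdGaussian w) (integrable_finsetSum _ fun i _ => hint i),
    integral_finsetSum _ fun i _ => hint i]
  simp only [integral_const_mul, integral_inner_sq_stdGaussian]

theorem exists_integral_prod_div_heat_rpow_le {c : ι → ℝ} (hc : ∀ i, 0 ≤ c i) (L : ℝ) :
    ∃ K, 0 ≤ K ∧ ∀ (u : ι → E → ℝ) (G : ι → E → E), (∀ i, RegularPos L (u i) (G i)) →
      ∀ x, (∀ r : ι → ℝ, ‖∑ i, c i • r i • G i x‖ ^ 2 ≤ ∑ i, c i * ‖r i • G i x‖ ^ 2) →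
        ∀ t, 0 ≤ t →
          ∫ z, ∏ i, (u i (x + √t • z) / heat t (u i) x) ^ c i ∂𝒩 E ≤ 1 + K * √t ^ 3 := by
  obtain ⟨K, m, hK, hm, hbound⟩ := exists_prod_div_heat_rpow_le (E := E) hc L
  refine ⟨K * ∫ z : E, (‖z‖ + m) ^ 3 ∂𝒩 E,
    mul_nonneg hK (integral_nonneg fun z => by positivity), fun u G hu x hG t ht => ?_⟩
  have hint_lin (i : ι) := ((hu i).integrable_div_heat_sub_one t x).const_mul (c i)
  have hint_quad := (integrable_inner_sq_sub_sum_inner_sq c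
    (∑ i, c i • (heat t (u i) x)⁻¹ • G i x) fun i => (heat t (u i) x)⁻¹ • G i x).const_mul (t / 2)
  have hint_cube : Integrable (fun z : E => (‖z‖ + m) ^ 3) (𝒩 E) := by
    simp only [add_pow]
    exact integrable_finsetSum _ fun k _ =>
      ((integrable_norm_pow_stdGaussian k).mul_const _).mul_const _
  have hint₁ := (integrable_const (μ := 𝒩 E) (1 : ℝ)).add
    (integrable_finsetSum Finset.univ fun i _ => hint_lin i)
  have hnonneg (z : E) : 0 ≤ ∏ i, (u i (x + √t • z) / heat t (u i) x) ^ c i :=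
    Finset.prod_nonneg fun i _ => Real.rpow_nonneg
      (div_nonneg ((hu i).apply_pos _).le (((hu i).regularPos_heat t).apply_pos x).le) _
  refine (integral_mono_of_nonneg (.of_forall hnonneg) ((hint₁.add hint_quad).add
    (hint_cube.const_mul (K * √t ^ 3))) (.of_forall (hbound u G hu t ht x))).trans ?_
  rw [integral_add' (hint₁.add hint_quad) (hint_cube.const_mul _), integral_add' hint₁ hint_quad,
    integral_add' (integrable_const 1) (integrable_finsetSum _ fun i _ => hint_lin i),
    integral_finsetSum _ fun i _ => hint_lin i]
  simp only [integral_const_mul, (hu _).integral_div_heat_sub_one, integral_const, probReal_univ,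
    integral_inner_sq_sub_sum_inner_sq, one_smul, mul_zero, Finset.sum_const_zero]
  linarith [mul_nonpos_of_nonneg_of_nonpos (div_nonneg ht zero_le_two)
    (sub_nonpos.2 (hG fun i => (heat t (u i) x)⁻¹))]

/-- The exponent `3 / 2 > 1` of the error is what makes the accumulated error vanish when a unit
time interval is divided into ever shorter steps. -/
theorem exists_heat_prod_rpow_le {c : ι → ℝ} (hc : ∀ i, 0 ≤ c i) (L : ℝ) :
    ∃ K, 0 ≤ K ∧ ∀ (u : ι → E → ℝ) (G : ι → E → E), (∀ i, RegularPos L (u i) (G i)) →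
      ∀ x, (∀ r : ι → ℝ, ‖∑ i, c i • r i • G i x‖ ^ 2 ≤ ∑ i, c i * ‖r i • G i x‖ ^ 2) →
        ∀ t, 0 ≤ t →
          heat t (fun y => ∏ i, u i y ^ c i) x ≤ ∏ i, heat t (u i) x ^ c i + K * √t ^ 3 := by
  obtain ⟨K, hK, hbound⟩ := exists_integral_prod_div_heat_rpow_le (E := E) hc L
  refine ⟨|∏ i, L ^ c i| * K, by positivity, fun u G hu x hG t ht => ?_⟩
  have hU (i : ι) := (hu i).regularPos_heat t
  have hUpos (i : ι) : 0 < heat t (u i) x := (hU i).apply_pos x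
  have hPpos : 0 ≤ ∏ i, heat t (u i) x ^ c i :=
    Finset.prod_nonneg fun i _ => Real.rpow_nonneg (hUpos i).le _
  have hPL : ∏ i, heat t (u i) x ^ c i ≤ |∏ i, L ^ c i| :=
    (le_abs_self _).trans ((RegularPos.norm_prod_rpow_le hU hc x).trans (le_abs_self _))
  have hfactor (z : E) : ∏ i, u i (x + √t • z) ^ c i =
      (∏ i, heat t (u i) x ^ c i) * ∏ i, (u i (x + √t • z) / heat t (u i) x) ^ c i := by
    rw [← Finset.prod_mul_distrib]
    refine Finset.prod_congr rfl fun i _ => ?_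
    rw [← Real.mul_rpow (hUpos i).le (div_nonneg ((hu i).apply_pos _).le (hUpos i).le),
      mul_div_cancel₀ _ (hUpos i).ne']
  calc heat t (fun y => ∏ i, u i y ^ c i) x
      = (∏ i, heat t (u i) x ^ c i) *
          ∫ z, ∏ i, (u i (x + √t • z) / heat t (u i) x) ^ c i ∂𝒩 E := by
        rw [heat, ← integral_const_mul]
        simp only [hfactor]
    _ ≤ (∏ i, heat t (u i) x ^ c i) * (1 + K * √t ^ 3) := by
        gcongr
        exact hbound u G hu x hG t ht
    _ = ∏ i, heat t (u i) x ^ c i + (∏ i, heat t (u i) x ^ c i) * K * √t ^ 3 := by ring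
    _ ≤ _ := by gcongr

theorem le_of_forall_le_add_mul_sqrt_pow_three {Φ : ℝ → ℝ} {K : ℝ}
    (h : ∀ s t, 0 ≤ s → 0 ≤ t → s + t ≤ 1 → Φ s ≤ Φ (s + t) + K * √t ^ 3) : Φ 0 ≤ Φ 1 := by
  have hsteps (N j : ℕ) (hj : j ≤ N + 1) :
      Φ 0 ≤ Φ (j * (N + 1 : ℝ)⁻¹) + j * (K * √(N + 1 : ℝ)⁻¹ ^ 3) := by
    induction j with
    | zero => simp
    | succ j ih =>
      have hj' : (j : ℝ) + 1 ≤ N + 1 := mod_cast hj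
      have hstep := h (j * (N + 1 : ℝ)⁻¹) (N + 1 : ℝ)⁻¹ (by positivity) (by positivity) (by
        rw [← add_one_mul]
        exact mul_inv_le_one_of_le₀ hj' (by positivity))
      rw [← add_one_mul] at hstep
      push_cast
      linarith [ih (by omega)]
  have hN (N : ℕ) : Φ 0 ≤ Φ 1 + K * √(N + 1 : ℝ)⁻¹ := by
    have hpos : (0 : ℝ) < N + 1 := by positivity
    have hsq : √(N + 1 : ℝ)⁻¹ ^ 2 = (N + 1 : ℝ)⁻¹ := Real.sq_sqrt (by positivity)
    refine (hsteps N (N + 1) le_rfl).trans_eq ?_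
    push_cast
    rw [mul_inv_cancel₀ hpos.ne', pow_succ, hsq]
    field_simp
  have hlim : Filter.Tendsto (fun N : ℕ => Φ 1 + K * √(N + 1 : ℝ)⁻¹) Filter.atTop
      (nhds (Φ 1 + K * √0)) := by
    refine tendsto_const_nhds.add (((Real.continuous_sqrt.tendsto 0).comp ?_).const_mul K)
    simpa using tendsto_one_div_add_atTop_nhds_zero_nat (𝕜 := ℝ)
  simpa using ge_of_tendsto' hlim hN

variable {F : ι → Type*} [∀ i, NormedAddCommGroup (F i)] [∀ i, InnerProductSpace ℝ (F i)]
  [∀ i, FiniteDimensional ℝ (F i)] [∀ i, MeasurableSpace (F i)] [∀ i, BorelSpace (F i)]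

theorem RegularPos.integral_prod_rpow_comp_le {B : ∀ i, E →L[ℝ] F i}
    (hB : ∀ i y, ‖(B i).adjoint y‖ = ‖y‖) {c : ι → ℝ} (hc : ∀ i, 0 ≤ c i)
    (hsum : ∀ x, ∑ i, c i * ‖B i x‖ ^ 2 ≤ ‖x‖ ^ 2) {L : ℝ} {u : ∀ i, F i → ℝ} {G : ∀ i, F i → F i}
    (hu : ∀ i, RegularPos L (u i) (G i)) :
    ∫ x, ∏ i, u i (B i x) ^ c i ∂𝒩 E ≤ ∏ i, (∫ y, u i y ∂𝒩 (F i)) ^ c i := by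
  obtain ⟨K, -, hstep⟩ := exists_heat_prod_rpow_le (E := E) hc L
  set v : ℝ → ι → E → ℝ := fun s i x => heat s (u i) (B i x) with hv
  have hreg (s : ℝ) (i : ι) : RegularPos L (v s i) _ :=
    ((hu i).regularPos_heat s).comp fun y => (hB i y).le
  have hheat {s t : ℝ} (hs : 0 ≤ s) (ht : 0 ≤ t) (i : ι) : heat t (v s i) = v (s + t) i := by
    ext x
    rw [hv, heat_comp (hB i) (continuous_heat (hu i).continuous (hu i).norm_apply_le s),
      heat_heat (hu i).continuous (hu i).norm_apply_le ht hs, add_comm t s]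
  have hmono : heat (1 - 0) (fun x => ∏ i, v 0 i x ^ c i) 0 ≤
      heat (1 - 1) (fun x => ∏ i, v 1 i x ^ c i) 0 := by
    refine le_of_forall_le_add_mul_sqrt_pow_three (K := K)
      (Φ := fun s => heat (1 - s) (fun x => ∏ i, v s i x ^ c i) 0) fun s t hs ht hst => ?_
    have hcont (s : ℝ) := RegularPos.continuous_prod_rpow (hreg s) c
    have hnorm (s : ℝ) := RegularPos.norm_prod_rpow_le (hreg s) hc
    rw [show 1 - s = 1 - (s + t) + t by ring, ← heat_heat (hcont s) (hnorm s) (by linarith) ht]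
    refine heat_le_heat_add (continuous_heat (hcont s) (hnorm s) t) (hcont _)
      (norm_heat_le (hnorm s) t) (hnorm _) (fun x => ?_) _ _
    simpa only [hheat hs ht] using hstep (v s) _ (hreg s) x (fun r => by
      simpa only [← map_smul, hB] using norm_sum_smul_adjoint_sq_le B hc hsum
        fun i => r i • heat s (G i) (B i x)) t ht
  simpa [hv, heat_zero, heat] using hmono

end HeatStep

section Approximation

variable {F : Type*} [NormedAddCommGroup F] [InnerProductSpace ℝ F] [FiniteDimensional ℝ F]

theorem exists_regularPos_of_hasCompactSupport {u : F → ℝ} (hu : ContDiff ℝ 2 u) {ε : ℝ}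
    (hε : 0 < ε) (hle : ∀ x, ε ≤ u x) (hsupp : HasCompactSupport fun x => u x - ε) :
    ∃ L G, RegularPos L u G := by
  have hfderiv : ContDiff ℝ 1 (fderiv ℝ u) := hu.fderiv_right (by norm_num)
  have hfderiv_supp : HasCompactSupport (fderiv ℝ u) := by
    simpa only [funext fun x => fderiv_sub_const (𝕜 := ℝ) (f := u) (x := x) ε] using
      hsupp.fderiv ℝ
  have hdiff (x : F) : DifferentiableAt ℝ u x := hu.differentiable (by simp) x
  obtain ⟨M, hM⟩ := hsupp.exists_bound_of_continuous (hu.continuous.sub continuous_const)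
  obtain ⟨K, hK⟩ := hfderiv_supp.exists_bound_of_continuous hfderiv.continuous
  obtain ⟨Λ, hΛ⟩ := hfderiv.lipschitzWith_of_hasCompactSupport hfderiv_supp (by simp)
  have hM₀ : 0 ≤ M := (norm_nonneg _).trans (hM 0)
  have hK₀ : 0 ≤ K := (norm_nonneg _).trans (hK 0)
  have hε' : 0 < ε⁻¹ := inv_pos.2 hε
  have : (0 : ℝ) ≤ Λ := Λ.2
  refine ⟨1 + ε⁻¹ + (M + ε) + K + Λ, fun x => (InnerProductSpace.toDual ℝ F).symm (fderiv ℝ u x),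
    ⟨by linarith, fun x => ?_, fun x => ?_, ?_, fun x => ?_, fun x v => ?_, fun x v => ?_⟩⟩
  · exact (inv_le_of_inv_le₀ hε (by linarith)).trans (hle x)
  · linarith [(le_abs_self _).trans (hM x)]
  · exact (LinearIsometryEquiv.continuous _).comp hfderiv.continuous
  · rw [LinearIsometryEquiv.norm_map]
    linarith [hK x]
  · have hlip := Convex.norm_image_sub_le_of_norm_fderiv_le (𝕜 := ℝ) (f := u) (C := K)
      (fun y _ => hdiff y) (fun y _ => hK y) convex_univ (Set.mem_univ x) (Set.mem_univ (x + v))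
    rw [add_sub_cancel_left] at hlip
    exact hlip.trans (by gcongr; linarith)
  · have htaylor := (convex_closedBall x ‖v‖).norm_image_sub_le_of_norm_fderiv_le' (𝕜 := ℝ) (f := u)
      (φ := fderiv ℝ u x) (C := Λ * ‖v‖) (fun y _ => hdiff y) (fun y hy => by
        refine (hΛ.norm_sub_le y x).trans ?_
        gcongr
        simpa [dist_eq_norm] using hy) (x := x) (y := x + v) (by simp) (by simp)
    rw [add_sub_cancel_left, mul_assoc, ← sq] at htaylor
    rw [InnerProductSpace.toDual_symm_apply]
    exact htaylor.trans (by gcongr; linarith)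

theorem exists_regularPos_sqrt_sq_add_sq {g : F → ℝ} (hg : ContDiff ℝ 2 g)
    (hsupp : HasCompactSupport g) {ε : ℝ} (hε : 0 < ε) :
    ∃ L G, RegularPos L (fun x => √(g x ^ 2 + ε ^ 2)) G := by
  refine exists_regularPos_of_hasCompactSupport
    (ContDiff.sqrt (by fun_prop) fun x => (by positivity : 0 < g x ^ 2 + ε ^ 2).ne') hε
    (fun x => Real.le_sqrt_of_sq_le (by linarith [sq_nonneg (g x)])) ?_
  exact hsupp.comp_left (g := fun s : ℝ => √(s ^ 2 + ε ^ 2) - ε) (by simp [Real.sqrt_sq hε.le])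

theorem abs_sqrt_sq_add_sq_sub_le {f g ε : ℝ} (hf : 0 ≤ f) (hε : 0 ≤ ε) :
    |√(g ^ 2 + ε ^ 2) - f| ≤ |f - g| + ε := by
  have hlower : |g| ≤ √(g ^ 2 + ε ^ 2) := Real.abs_le_sqrt (by nlinarith)
  have hupper : √(g ^ 2 + ε ^ 2) ≤ |g| + ε := by
    rw [Real.sqrt_le_left (by positivity)]
    nlinarith [abs_nonneg g, sq_abs g, mul_nonneg (abs_nonneg g) hε]
  have hdist := abs_le.1 (abs_abs_sub_abs_le_abs_sub f g)
  rw [abs_of_nonneg hf] at hdist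
  rw [abs_le]
  constructor <;> linarith

variable [MeasurableSpace F] [BorelSpace F] {μ : Measure F} [IsProbabilityMeasure μ]

theorem exists_regularPos_eLpNorm_sub_le {f : F → ℝ} (hf₀ : ∀ x, 0 ≤ f x) (hf : Integrable f μ)
    {ε : ℝ} (hε : 0 < ε) :
    ∃ L u G, RegularPos L u G ∧ eLpNorm (u - f) 1 μ ≤ ENNReal.ofReal (2 * ε) := by
  have hmem : MemLp f 1 μ := memLp_one_iff_integrable.2 hf
  obtain ⟨g, hsupp, hg, hfg⟩ := hmem.exist_eLpNorm_sub_le (by simp) le_rfl hε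
  obtain ⟨L, G, hreg⟩ := exists_regularPos_sqrt_sq_add_sq (hg.of_le ENat.LEInfty.out) hsupp hε
  refine ⟨L, _, G, hreg, ?_⟩
  calc eLpNorm ((fun x => √(g x ^ 2 + ε ^ 2)) - f) 1 μ
      ≤ eLpNorm ((fun x => |f x - g x|) + fun _ => ε) 1 μ := eLpNorm_mono_real fun x =>
        abs_sqrt_sq_add_sq_sub_le (hf₀ x) hε.le
    _ ≤ eLpNorm (fun x => |f x - g x|) 1 μ + eLpNorm (fun _ => ε) 1 μ :=
        eLpNorm_add_le (hf.sub' (hg.continuous.integrable_of_hasCompactSupport hsupp)).abs.1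
          (by fun_prop) le_rfl
    _ ≤ ENNReal.ofReal ε + ENNReal.ofReal ε := by
        refine add_le_add ((eLpNorm_norm (f - g)).trans_le hfg) ?_
        simp [eLpNorm_const ε one_ne_zero (NeZero.ne μ), Real.enorm_eq_ofReal hε.le]
    _ = ENNReal.ofReal (2 * ε) := by rw [← ENNReal.ofReal_add hε.le hε.le, two_mul]

theorem exists_seq_regularPos_tendsto {f : F → ℝ} (hf₀ : ∀ x, 0 ≤ f x) (hf : Integrable f μ) :
    ∃ (L : ℕ → ℝ) (u : ℕ → F → ℝ) (G : ℕ → F → F), (∀ k, RegularPos (L k) (u k) (G k)) ∧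
      (∀ᵐ x ∂μ, Filter.Tendsto (fun k => u k x) Filter.atTop (nhds (f x))) ∧
      Filter.Tendsto (fun k => ∫ x, u k x ∂μ) Filter.atTop (nhds (∫ x, f x ∂μ)) := by
  choose L u G hreg hle using fun k : ℕ =>
    exists_regularPos_eLpNorm_sub_le hf₀ hf (ε := 1 / ((k : ℝ) + 1)) (by positivity)
  have hint (k : ℕ) : Integrable (u k) μ :=
    .of_bound (hreg k).continuous.aestronglyMeasurable _ (.of_forall (hreg k).norm_apply_le)
  have hL1 : Filter.Tendsto (fun k => eLpNorm (u k - f) 1 μ) Filter.atTop (nhds 0) := by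
    refine tendsto_of_tendsto_of_tendsto_of_le_of_le tendsto_const_nhds ?_ (fun _ => zero_le) hle
    simpa using ENNReal.tendsto_ofReal
      ((tendsto_one_div_add_atTop_nhds_zero_nat (𝕜 := ℝ)).const_mul 2)
  obtain ⟨ns, hns, hae⟩ := (tendstoInMeasure_of_tendsto_eLpNorm one_ne_zero
    (fun k => (hint k).aestronglyMeasurable) hf.aestronglyMeasurable hL1).exists_seq_tendsto_ae
  exact ⟨_, _, _, fun k => hreg (ns k), hae,
    (tendsto_integral_of_L1' f hf.aestronglyMeasurable (.of_forall hint) hL1).comp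
      hns.tendsto_atTop⟩

end Approximation

section Coisometries

variable {ι : Type*} [Fintype ι] {E : Type*} [NormedAddCommGroup E] [InnerProductSpace ℝ E]
  [FiniteDimensional ℝ E] [MeasurableSpace E] [BorelSpace E] {F : ι → Type*}
  [∀ i, NormedAddCommGroup (F i)] [∀ i, InnerProductSpace ℝ (F i)] [∀ i, FiniteDimensional ℝ (F i)]
  [∀ i, MeasurableSpace (F i)] [∀ i, BorelSpace (F i)]

theorem ofReal_prod_rpow {a c : ι → ℝ} (ha : ∀ i, 0 ≤ a i) (hc : ∀ i, 0 ≤ c i) :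
    ENNReal.ofReal (∏ i, a i ^ c i) = ∏ i, ENNReal.ofReal (a i) ^ c i := by
  rw [ENNReal.ofReal_prod_of_nonneg fun i _ => Real.rpow_nonneg (ha i) _]
  exact Finset.prod_congr rfl fun i _ => (ENNReal.ofReal_rpow_of_nonneg (ha i) (hc i)).symm

theorem RegularPos.lintegral_prod_rpow_comp_le {B : ∀ i, E →L[ℝ] F i}
    (hB : ∀ i y, ‖(B i).adjoint y‖ = ‖y‖) {c : ι → ℝ} (hc : ∀ i, 0 ≤ c i)
    (hsum : ∀ x, ∑ i, c i * ‖B i x‖ ^ 2 ≤ ‖x‖ ^ 2) {L : ι → ℝ} {u : ∀ i, F i → ℝ}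
    {G : ∀ i, F i → F i} (hu : ∀ i, RegularPos (L i) (u i) (G i)) :
    ∫⁻ x, ENNReal.ofReal (∏ i, u i (B i x) ^ c i) ∂𝒩 E ≤
      ENNReal.ofReal (∏ i, (∫ y, u i y ∂𝒩 (F i)) ^ c i) := by
  have hu' (i : ι) : RegularPos (∑ j, L j) (u i) (G i) :=
    (hu i).mono (Finset.single_le_sum (fun j _ => (hu j).bound_pos.le) (Finset.mem_univ i))
  have hcomp (i : ι) := (hu' i).comp fun y => (hB i y).le
  rw [← ofReal_integral_eq_lintegral_ofReal
    (.of_bound (continuous_prod_rpow hcomp c).aestronglyMeasurable _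
      (.of_forall (norm_prod_rpow_le hcomp hc)))
    (.of_forall fun x => Finset.prod_nonneg fun i _ => Real.rpow_nonneg ((hu i).apply_pos _).le _)]
  exact ENNReal.ofReal_le_ofReal (integral_prod_rpow_comp_le hB hc hsum hu')

theorem lintegral_prod_rpow_comp_le_of_norm_adjoint_eq {B : ∀ i, E →L[ℝ] F i}
    (hB : ∀ i y, ‖(B i).adjoint y‖ = ‖y‖) {c : ι → ℝ} (hc : ∀ i, 0 ≤ c i)
    (hsum : ∀ x, ∑ i, c i * ‖B i x‖ ^ 2 ≤ ‖x‖ ^ 2) {f : ∀ i, F i → ℝ} (hf₀ : ∀ i x, 0 ≤ f i x)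
    (hf : ∀ i, Integrable (f i) (𝒩 (F i))) :
    ∫⁻ x, ∏ i, ENNReal.ofReal (f i (B i x)) ^ c i ∂𝒩 E ≤
      ∏ i, ENNReal.ofReal (∫ y, f i y ∂𝒩 (F i)) ^ c i := by
  choose L u G hreg hae hlim using fun i => exists_seq_regularPos_tendsto (hf₀ i) (hf i)
  have hcont (k : ℕ) : Continuous fun x => ∏ i, u i k (B i x) ^ c i :=
    continuous_finsetProd _ fun i _ => ((hreg i k).continuous.comp (B i).continuous).rpow_const
      fun _ => .inr (hc i)
  have hae' : ∀ᵐ x ∂𝒩 E, ∀ i, Filter.Tendsto (fun k => u i k (B i x)) Filter.atTop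
      (nhds (f i (B i x))) := by
    refine ae_all_iff.2 fun i => ae_of_ae_map (f := B i) (B i).continuous.aemeasurable
      (p := fun y => Filter.Tendsto (fun k => u i k y) Filter.atTop (nhds (f i y))) ?_
    simpa only [map_stdGaussian_of_norm_adjoint_eq (hB i)] using hae i
  have hlim_prod : ∀ᵐ x ∂𝒩 E, ∏ i, ENNReal.ofReal (f i (B i x)) ^ c i =
      Filter.liminf (fun k => ENNReal.ofReal (∏ i, u i k (B i x) ^ c i)) Filter.atTop := by
    filter_upwards [hae'] with x hx
    rw [← ofReal_prod_rpow (fun i => hf₀ i (B i x)) hc]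
    exact (ENNReal.tendsto_ofReal (tendsto_finsetProd _ fun i _ =>
      (hx i).rpow_const (.inr (hc i)))).liminf_eq.symm
  have hlim_integral : Filter.Tendsto
      (fun k => ENNReal.ofReal (∏ i, (∫ y, u i k y ∂𝒩 (F i)) ^ c i)) Filter.atTop
      (nhds (ENNReal.ofReal (∏ i, (∫ y, f i y ∂𝒩 (F i)) ^ c i))) :=
    ENNReal.tendsto_ofReal (tendsto_finsetProd _ fun i _ => (hlim i).rpow_const (.inr (hc i)))
  calc ∫⁻ x, ∏ i, ENNReal.ofReal (f i (B i x)) ^ c i ∂𝒩 E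
      = ∫⁻ x, Filter.liminf (fun k => ENNReal.ofReal (∏ i, u i k (B i x) ^ c i)) Filter.atTop
          ∂𝒩 E := lintegral_congr_ae hlim_prod
    _ ≤ Filter.liminf (fun k => ∫⁻ x, ENNReal.ofReal (∏ i, u i k (B i x) ^ c i) ∂𝒩 E)
          Filter.atTop := lintegral_liminf_le fun k => (hcont k).measurable.ennreal_ofReal
    _ ≤ Filter.liminf (fun k => ENNReal.ofReal (∏ i, (∫ y, u i k y ∂𝒩 (F i)) ^ c i))
          Filter.atTop := Filter.liminf_le_liminf (.of_forall fun k =>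
        RegularPos.lintegral_prod_rpow_comp_le hB hc hsum fun i => hreg i k)
    _ = ENNReal.ofReal (∏ i, (∫ y, f i y ∂𝒩 (F i)) ^ c i) := hlim_integral.liminf_eq
    _ = ∏ i, ENNReal.ofReal (∫ y, f i y ∂𝒩 (F i)) ^ c i :=
        ofReal_prod_rpow (fun i => integral_nonneg (hf₀ i)) hc

end Coisometries

section Lift

variable {ι : Type*} {H : Type*} [NormedAddCommGroup H] [InnerProductSpace ℝ H]
  {G : ι → Type*} [∀ i, NormedAddCommGroup (G i)] [∀ i, InnerProductSpace ℝ (G i)]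

/-- The map `(x, z) ↦ C x + R (z i)`. With `R Rᵀ = 1 - C Cᵀ` it is a coisometry extending `C`. -/
def liftMap {F : Type*} [NormedAddCommGroup F] [InnerProductSpace ℝ F] (C : H →L[ℝ] F) (i : ι)
    (R : G i →L[ℝ] F) : WithLp 2 (H × PiLp 2 G) →L[ℝ] F :=
  C ∘L WithLp.fstL 2 ℝ H (PiLp 2 G) + R ∘L PiLp.proj 2 G i ∘L WithLp.sndL 2 ℝ H (PiLp 2 G)

theorem liftMap_apply {F : Type*} [NormedAddCommGroup F] [InnerProductSpace ℝ F] (C : H →L[ℝ] F)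
    (i : ι) (R : G i →L[ℝ] F) (x : WithLp 2 (H × PiLp 2 G)) :
    liftMap C i R x = C x.fst + R (x.snd i) := rfl

theorem ofReal_rpow_le_prod_liftMap {F : Type*} [NormedAddCommGroup F] [InnerProductSpace ℝ F]
    {C : H →L[ℝ] F} {i : ι} {R : G i →L[ℝ] F} {f : F → ℝ} (hf₀ : ∀ y, 0 ≤ f y)
    (hmid : ∀ y z, f y ≤ f (y + R z) ^ (1 / 2 : ℝ) * f (y - R z) ^ (1 / 2 : ℝ)) {c : ℝ}
    (hc : 0 ≤ c) (x : WithLp 2 (H × PiLp 2 G)) :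
    ENNReal.ofReal (f (C x.fst)) ^ c ≤
      ∏ j : Fin 2, ENNReal.ofReal (f (liftMap C i ((-1 : ℝ) ^ (j : ℕ) • R) x)) ^ (c / 2) := by
  have hhalf (y : F) : ENNReal.ofReal (f y ^ (1 / 2 : ℝ)) = ENNReal.ofReal (f y) ^ (1 / 2 : ℝ) :=
    (ENNReal.ofReal_rpow_of_nonneg (hf₀ y) one_half_pos.le).symm
  have hle := ENNReal.rpow_le_rpow (ENNReal.ofReal_le_ofReal (hmid (C x.fst) (x.snd i))) hc
  rw [ENNReal.ofReal_mul (Real.rpow_nonneg (hf₀ _) _), hhalf, hhalf,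
    ENNReal.mul_rpow_of_nonneg _ _ hc, ← ENNReal.rpow_mul, ← ENNReal.rpow_mul,
    one_div_mul_eq_div] at hle
  simpa [liftMap_apply, ← sub_eq_add_neg] using hle

variable [Fintype ι]

theorem prod_prod_rpow_div_card {κ : Type*} [Fintype κ] [Nonempty κ] (a : ι → ℝ≥0∞) (c : ι → ℝ) :
    ∏ q : ι × κ, a q.1 ^ (c q.1 / Fintype.card κ) = ∏ i, a i ^ c i := by
  rw [Fintype.prod_prod_type]
  refine Finset.prod_congr rfl fun i _ => ?_
  simp only [Finset.prod_const]
  rw [Finset.card_univ, ← ENNReal.rpow_mul_natCast,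
    div_mul_cancel₀ _ (Nat.cast_ne_zero.2 Fintype.card_ne_zero)]

theorem sum_prod_div_card_mul {κ : Type*} [Fintype κ] [Nonempty κ] (c a : ι → ℝ) :
    ∑ q : ι × κ, c q.1 / Fintype.card κ * a q.1 = ∑ i, c i * a i := by
  have hcard : (Fintype.card κ : ℝ) ≠ 0 := Nat.cast_ne_zero.2 Fintype.card_ne_zero
  rw [Fintype.sum_prod_type]
  refine Finset.sum_congr rfl fun i _ => ?_
  simp only [Finset.sum_const, Finset.card_univ, nsmul_eq_mul]
  field_simp

theorem sum_norm_liftMap_sq_le {F : ι → Type*} [∀ i, NormedAddCommGroup (F i)]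
    [∀ i, InnerProductSpace ℝ (F i)] {C : ∀ i, H →L[ℝ] F i} {R : ∀ i, G i →L[ℝ] F i}
    (hR : ∀ i z, ‖R i z‖ ≤ ‖z‖) {c : ι → ℝ} (hc₁ : ∀ i, c i ≤ 1)
    (hsum : ∀ x, ∑ i, c i * ‖C i x‖ ^ 2 ≤ ‖x‖ ^ 2) (x : WithLp 2 (H × PiLp 2 G)) :
    ∑ q : ι × Fin 2, c q.1 / 2 *
      ‖liftMap (C q.1) q.1 ((-1 : ℝ) ^ (q.2 : ℕ) • R q.1) x‖ ^ 2 ≤ ‖x‖ ^ 2 := by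
  have hpair (i : ι) : ∑ j : Fin 2, c i / 2 * ‖liftMap (C i) i ((-1 : ℝ) ^ (j : ℕ) • R i) x‖ ^ 2 =
      c i * ‖C i x.fst‖ ^ 2 + c i * ‖R i (x.snd i)‖ ^ 2 := by
    simp only [Fin.sum_univ_two, liftMap_apply, _root_.smul_apply, Fin.val_zero, Fin.val_one,
      pow_zero, pow_one, one_smul, neg_smul, norm_add_sq_real, inner_neg_right, norm_neg]
    ring
  rw [Fintype.sum_prod_type, WithLp.prod_norm_sq_eq_of_L2, PiLp.norm_sq_eq_of_L2]
  simp only [hpair, Finset.sum_add_distrib]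
  refine add_le_add (hsum _) (Finset.sum_le_sum fun i _ => ?_)
  calc c i * ‖R i (x.snd i)‖ ^ 2 ≤ 1 * ‖x.snd i‖ ^ 2 :=
        mul_le_mul (hc₁ i) (pow_le_pow_left₀ (norm_nonneg _) (hR i _) 2) (by positivity) zero_le_one
    _ = ‖x.snd i‖ ^ 2 := one_mul _

variable [FiniteDimensional ℝ H] [∀ i, FiniteDimensional ℝ (G i)]

theorem norm_adjoint_fstL {G : Type*} [NormedAddCommGroup G] [InnerProductSpace ℝ G]
    [FiniteDimensional ℝ G] (y : H) : ‖(WithLp.fstL 2 ℝ H G).adjoint y‖ = ‖y‖ := by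
  have hadjoint : (WithLp.fstL 2 ℝ H G).adjoint y = WithLp.toLp 2 (y, 0) :=
    ext_inner_right ℝ fun x => by simp [ContinuousLinearMap.adjoint_inner_left]
  simp [hadjoint]

theorem norm_adjoint_liftMap_sq {F : Type*} [NormedAddCommGroup F] [InnerProductSpace ℝ F]
    [FiniteDimensional ℝ F] (C : H →L[ℝ] F) (i : ι) (R : G i →L[ℝ] F) (y : F) :
    ‖(liftMap C i R).adjoint y‖ ^ 2 = ‖C.adjoint y‖ ^ 2 + ‖R.adjoint y‖ ^ 2 := by
  classical
  have hadjoint : (liftMap C i R).adjoint y =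
      WithLp.toLp 2 (C.adjoint y, PiLp.single 2 i (R.adjoint y)) := by
    refine ext_inner_right ℝ fun x => ?_
    rw [ContinuousLinearMap.adjoint_inner_left, liftMap_apply, inner_add_right,
      WithLp.prod_inner_apply, PiLp.inner_apply, Finset.sum_eq_single i]
    · simp [ContinuousLinearMap.adjoint_inner_left]
    · intro j _ hj
      simp [hj]
    · simp
  simp [hadjoint, WithLp.prod_norm_sq_eq_of_L2]

variable [MeasurableSpace H] [BorelSpace H] [∀ i, MeasurableSpace (G i)] [∀ i, BorelSpace (G i)]
  {F : ι → Type*} [∀ i, NormedAddCommGroup (F i)] [∀ i, InnerProductSpace ℝ (F i)]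
  [∀ i, FiniteDimensional ℝ (F i)] [∀ i, MeasurableSpace (F i)] [∀ i, BorelSpace (F i)]
  {C : ∀ i, H →L[ℝ] F i} {R : ∀ i, G i →L[ℝ] F i} {c : ι → ℝ} {f : ∀ i, F i → ℝ}

theorem lintegral_prod_rpow_comp_le_of_le_one
    (hCR : ∀ i y, ‖(C i).adjoint y‖ ^ 2 + ‖(R i).adjoint y‖ ^ 2 = ‖y‖ ^ 2)
    (hc : ∀ i, 0 ≤ c i) (hc₁ : ∀ i, c i ≤ 1) (hsum : ∀ x, ∑ i, c i * ‖C i x‖ ^ 2 ≤ ‖x‖ ^ 2)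
    (hf₀ : ∀ i x, 0 ≤ f i x) (hf : ∀ i, Integrable (f i) (𝒩 (F i)))
    (hmid : ∀ i y z, f i y ≤ f i (y + R i z) ^ (1 / 2 : ℝ) * f i (y - R i z) ^ (1 / 2 : ℝ)) :
    ∫⁻ x, ∏ i, ENNReal.ofReal (f i (C i x)) ^ c i ∂𝒩 H ≤
      ∏ i, ENNReal.ofReal (∫ y, f i y ∂𝒩 (F i)) ^ c i := by
  let B (q : ι × Fin 2) : WithLp 2 (H × PiLp 2 G) →L[ℝ] F q.1 :=
    liftMap (C q.1) q.1 ((-1 : ℝ) ^ (q.2 : ℕ) • R q.1)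
  have hB (q : ι × Fin 2) (y : F q.1) : ‖(B q).adjoint y‖ = ‖y‖ := by
    rw [← sq_eq_sq₀ (norm_nonneg _) (norm_nonneg _), norm_adjoint_liftMap_sq, ← hCR q.1 y]
    simp [norm_smul]
  have hR (i : ι) (z : G i) : ‖R i z‖ ≤ ‖z‖ := norm_apply_le_of_norm_adjoint_le
    (fun y => le_of_sq_le_sq (by linarith [hCR i y, sq_nonneg ‖(C i).adjoint y‖])
      (norm_nonneg y)) z
  calc ∫⁻ x, ∏ i, ENNReal.ofReal (f i (C i x)) ^ c i ∂𝒩 H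
      ≤ ∫⁻ x, ∏ i, ENNReal.ofReal (f i (C i (WithLp.fst x))) ^ c i
          ∂𝒩 (WithLp 2 (H × PiLp 2 G)) := by
        rw [← map_stdGaussian_of_norm_adjoint_eq (norm_adjoint_fstL (H := H) (G := PiLp 2 G))]
        exact lintegral_map_le _ _
    _ ≤ ∫⁻ x, ∏ q, ENNReal.ofReal (f q.1 (B q x)) ^ (c q.1 / 2) ∂𝒩 _ := by
        refine lintegral_mono fun x => ?_
        rw [Fintype.prod_prod_type]
        exact Finset.prod_le_prod' fun i _ =>
          ofReal_rpow_le_prod_liftMap (hf₀ i) (hmid i) (hc i) x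
    _ ≤ ∏ q : ι × Fin 2, ENNReal.ofReal (∫ y, f q.1 y ∂𝒩 (F q.1)) ^ (c q.1 / 2) :=
        lintegral_prod_rpow_comp_le_of_norm_adjoint_eq hB (fun q => by linarith [hc q.1])
          (sum_norm_liftMap_sq_le hR hc₁ hsum) (fun q => hf₀ q.1) fun q => hf q.1
    _ = ∏ i, ENNReal.ofReal (∫ y, f i y ∂𝒩 (F i)) ^ c i := by
        simpa using prod_prod_rpow_div_card (κ := Fin 2)
          (fun i => ENNReal.ofReal (∫ y, f i y ∂𝒩 (F i))) c

theorem lintegral_prod_rpow_comp_le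
    (hCR : ∀ i y, ‖(C i).adjoint y‖ ^ 2 + ‖(R i).adjoint y‖ ^ 2 = ‖y‖ ^ 2)
    (hc : ∀ i, 0 ≤ c i) (hsum : ∀ x, ∑ i, c i * ‖C i x‖ ^ 2 ≤ ‖x‖ ^ 2)
    (hf₀ : ∀ i x, 0 ≤ f i x) (hf : ∀ i, Integrable (f i) (𝒩 (F i)))
    (hmid : ∀ i y z, f i y ≤ f i (y + R i z) ^ (1 / 2 : ℝ) * f i (y - R i z) ^ (1 / 2 : ℝ)) :
    ∫⁻ x, ∏ i, ENNReal.ofReal (f i (C i x)) ^ c i ∂𝒩 H ≤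
      ∏ i, ENNReal.ofReal (∫ y, f i y ∂𝒩 (F i)) ^ c i := by
  obtain ⟨k, hk⟩ := exists_nat_ge (∑ i, c i)
  have hck (i : ι) : c i / Fintype.card (Fin (k + 1)) ≤ 1 := by
    rw [Fintype.card_fin, div_le_one (by positivity), Nat.cast_add_one]
    linarith [Finset.single_le_sum (fun j _ => hc j) (Finset.mem_univ i)]
  calc ∫⁻ x, ∏ i, ENNReal.ofReal (f i (C i x)) ^ c i ∂𝒩 H
      = ∫⁻ x, ∏ q : ι × Fin (k + 1), ENNReal.ofReal (f q.1 (C q.1 x)) ^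
          (c q.1 / Fintype.card (Fin (k + 1))) ∂𝒩 H := lintegral_congr fun x =>
        (prod_prod_rpow_div_card (fun i => ENNReal.ofReal (f i (C i x))) c).symm
    _ ≤ ∏ q : ι × Fin (k + 1), ENNReal.ofReal (∫ y, f q.1 y ∂𝒩 (F q.1)) ^
          (c q.1 / Fintype.card (Fin (k + 1))) :=
        lintegral_prod_rpow_comp_le_of_le_one (ι := ι × Fin (k + 1)) (C := fun q => C q.1)
          (R := fun q => R q.1) (f := fun q => f q.1) (fun q => hCR q.1)
          (fun q => div_nonneg (hc q.1) (Nat.cast_nonneg _)) (fun q => hck q.1)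
          (fun x => (sum_prod_div_card_mul c fun i => ‖C i x‖ ^ 2).trans_le (hsum x))
          (fun q => hf₀ q.1) (fun q => hf q.1) fun q => hmid q.1
    _ = ∏ i, ENNReal.ofReal (∫ y, f i y ∂𝒩 (F i)) ^ c i :=
        prod_prod_rpow_div_card (fun i => ENNReal.ofReal (∫ y, f i y ∂𝒩 (F i))) c

end Lift

section Coordinates

theorem pi_withDensity_ofReal {ι : Type*} [Fintype ι] {E : ι → Type*}
    [∀ i, MeasurableSpace (E i)] {μ : ∀ i, Measure (E i)} [∀ i, SigmaFinite (μ i)]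
    {φ : ∀ i, E i → ℝ} (hφ₀ : ∀ i t, 0 ≤ φ i t) (hφ : ∀ i, Integrable (φ i) (μ i)) :
    Measure.pi (fun i => (μ i).withDensity fun t => ENNReal.ofReal (φ i t)) =
      (Measure.pi μ).withDensity fun x => ENNReal.ofReal (∏ i, φ i (x i)) := by
  refine Measure.pi_eq fun s hs => ?_
  have hind (x : ∀ i, E i) : ∏ i, (s i).indicator (φ i) (x i) =
      (Set.univ.pi s).indicator (fun x => ∏ i, φ i (x i)) x := by
    by_cases hx : x ∈ Set.univ.pi s
    · rw [Set.indicator_of_mem hx]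
      exact Finset.prod_congr rfl fun i _ => Set.indicator_of_mem (hx i trivial) _
    · obtain ⟨i, hi⟩ : ∃ i, x i ∉ s i := by simpa using hx
      rw [Set.indicator_of_notMem hx,
        Finset.prod_eq_zero (Finset.mem_univ i) (Set.indicator_of_notMem hi _)]
  have hprod : IntegrableOn (fun x => ∏ i, φ i (x i)) (Set.univ.pi s) (Measure.pi μ) :=
    (Integrable.fintype_prod_dep hφ).integrableOn
  calc (Measure.pi μ).withDensity (fun x => ENNReal.ofReal (∏ i, φ i (x i))) (Set.univ.pi s)
      = ENNReal.ofReal (∫ x in Set.univ.pi s, ∏ i, φ i (x i) ∂Measure.pi μ) := by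
        rw [withDensity_apply _ (.univ_pi hs), ofReal_integral_eq_lintegral_ofReal hprod
          (.of_forall fun x => Finset.prod_nonneg fun i _ => hφ₀ i _)]
    _ = ENNReal.ofReal (∏ i, ∫ t in s i, φ i t ∂μ i) := by
        simp_rw [← integral_indicator (MeasurableSet.univ_pi hs), ← hind,
          integral_fintype_prod_eq_prod fun i => (s i).indicator (φ i), integral_indicator (hs _)]
    _ = ∏ i, (μ i).withDensity (fun t => ENNReal.ofReal (φ i t)) (s i) := by
        rw [ENNReal.ofReal_prod_of_nonneg fun i _ => integral_nonneg (hφ₀ i)]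
        exact Finset.prod_congr rfl fun i _ => by
          rw [withDensity_apply _ (hs i), ofReal_integral_eq_lintegral_ofReal (hφ i).integrableOn
            (.of_forall (hφ₀ i))]

theorem prod_gaussianPDFReal_zero_one {k : ℕ} (x : Fin k → ℝ) :
    ∏ i, ProbabilityTheory.gaussianPDFReal 0 1 (x i) =
      (2 * Real.pi) ^ (-(k : ℝ) / 2) * Real.exp (-(∑ i, x i ^ 2) / 2) := by
  simp only [ProbabilityTheory.gaussianPDFReal, NNReal.coe_one, mul_one, sub_zero]
  rw [Finset.prod_mul_distrib, ← Real.exp_sum, ← Finset.sum_div, Finset.sum_neg_distrib,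
    Finset.prod_const, Finset.card_univ, Fintype.card_fin, Real.sqrt_eq_rpow,
    ← Real.rpow_neg (by positivity), ← Real.rpow_mul_natCast (by positivity)]
  ring_nf

theorem pi_gaussianReal_eq_stdGaussian (k : ℕ) :
    Measure.pi (fun _ : Fin k => ProbabilityTheory.gaussianReal 0 1) = stdGaussian k := by
  simp_rw [ProbabilityTheory.gaussianReal_of_var_ne_zero _ one_ne_zero,
    ProbabilityTheory.gaussianPDF_def, stdGaussian, ← prod_gaussianPDFReal_zero_one]
  exact pi_withDensity_ofReal (fun _ => ProbabilityTheory.gaussianPDFReal_nonneg 0 1)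
    fun _ => ProbabilityTheory.integrable_gaussianPDFReal 0 1

theorem map_ofLp_stdGaussian (k : ℕ) :
    (𝒩 (EuclideanSpace ℝ (Fin k))).map WithLp.ofLp = stdGaussian k := by
  rw [← ProbabilityTheory.map_pi_eq_stdGaussian, Measure.map_map (by fun_prop) (by fun_prop),
    ← pi_gaussianReal_eq_stdGaussian]
  exact Measure.map_id

open scoped MatrixOrder in
theorem exists_transpose_mul_self_eq_of_mul_eq_zero {k l : ℕ} {A : Matrix (Fin k) (Fin k) ℝ}
    {S : Matrix (Fin k) (Fin l) ℝ} (hA : A.PosSemidef) (hAS : A * S = 0) :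
    ∃ B : Matrix (Fin k) (Fin k) ℝ, Bᵀ * B = A ∧ B * S = 0 := by
  obtain ⟨B, rfl⟩ := CStarAlgebra.nonneg_iff_eq_star_mul_self.1 hA.nonneg
  exact ⟨B, by rw [star_eq_conjTranspose, conjTranspose_eq_transpose_of_trivial],
    (conjTranspose_mul_self_mul_eq_zero B S).1 hAS⟩

theorem MoreLogConvex.nonneg {k : ℕ} {f : (Fin k → ℝ) → ℝ} {Q : Matrix (Fin k) (Fin k) ℝ}
    (hf : MoreLogConvex f Q) (x : Fin k → ℝ) : 0 ≤ f x := by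
  obtain ⟨h, ⟨h₀, -⟩, rfl⟩ := hf
  exact mul_nonneg (Real.exp_nonneg _) (h₀ x)

theorem gaussFn_add_rpow_half_mul_gaussFn_sub_rpow_half {k : ℕ} {Q : Matrix (Fin k) (Fin k) ℝ}
    {v : Fin k → ℝ} (hv : v ᵥ* Q = 0) (y : Fin k → ℝ) :
    gaussFn Q (y + v) ^ (1 / 2 : ℝ) * gaussFn Q (y - v) ^ (1 / 2 : ℝ) = gaussFn Q y := by
  have hv' (w : Fin k → ℝ) : Q *ᵥ w ⬝ᵥ v = 0 := by
    rw [dotProduct_comm, dotProduct_mulVec, hv, zero_dotProduct]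
  simp only [gaussFn, ← Real.exp_mul, ← Real.exp_add, mulVec_add, mulVec_sub, dotProduct_add,
    dotProduct_sub, add_dotProduct, sub_dotProduct, hv']
  ring_nf

theorem MoreLogConvex.le_midpoint {k : ℕ} {f : (Fin k → ℝ) → ℝ} {Q : Matrix (Fin k) (Fin k) ℝ}
    (hf : MoreLogConvex f Q) {v : Fin k → ℝ} (hv : v ᵥ* Q = 0) (y : Fin k → ℝ) :
    f y ≤ f (y + v) ^ (1 / 2 : ℝ) * f (y - v) ^ (1 / 2 : ℝ) := by
  obtain ⟨h, ⟨h₀, hlc⟩, rfl⟩ := hf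
  have hg (x : Fin k → ℝ) : 0 ≤ gaussFn Q x := Real.exp_nonneg _
  have hy : (1 / 2 : ℝ) • (y + v) + (1 / 2 : ℝ) • (y - v) = y := by module
  have hmid : h y ≤ h (y + v) ^ (1 / 2 : ℝ) * h (y - v) ^ (1 / 2 : ℝ) := by
    simpa only [hy] using
      hlc (y + v) (y - v) (1 / 2) (1 / 2) (by norm_num) (by norm_num) (by norm_num)
  simp only [Real.mul_rpow (hg _) (h₀ _)]
  rw [mul_mul_mul_comm, gaussFn_add_rpow_half_mul_gaussFn_sub_rpow_half hv]
  exact mul_le_mul_of_nonneg_left hmid (hg y)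

/-- The continuous linear map between Euclidean spaces with matrix `A` in the standard bases
(`Matrix.toEuclideanCLM` covers only square matrices). -/
def euclideanCLM {k n : ℕ} (A : Matrix (Fin k) (Fin n) ℝ) :
    EuclideanSpace ℝ (Fin n) →L[ℝ] EuclideanSpace ℝ (Fin k) :=
  A.toEuclideanLin.toContinuousLinearMap

theorem ofLp_euclideanCLM {k n : ℕ} (A : Matrix (Fin k) (Fin n) ℝ)
    (x : EuclideanSpace ℝ (Fin n)) : (euclideanCLM A x).ofLp = A *ᵥ x.ofLp := rfl

theorem adjoint_euclideanCLM {k n : ℕ} (A : Matrix (Fin k) (Fin n) ℝ) :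
    (euclideanCLM A).adjoint = euclideanCLM Aᵀ := by
  rw [euclideanCLM, euclideanCLM, ← LinearMap.adjoint_toContinuousLinearMap,
    ← Matrix.toEuclideanLin_conjTranspose_eq_adjoint, conjTranspose_eq_transpose_of_trivial]

theorem norm_sq_eq_dotProduct {k : ℕ} (x : EuclideanSpace ℝ (Fin k)) :
    ‖x‖ ^ 2 = x.ofLp ⬝ᵥ x.ofLp := by
  rw [EuclideanSpace.real_norm_sq_eq]
  simp only [dotProduct, sq]

theorem norm_euclideanCLM_sq {k n : ℕ} (A : Matrix (Fin k) (Fin n) ℝ)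
    (x : EuclideanSpace ℝ (Fin n)) :
    ‖euclideanCLM A x‖ ^ 2 = x.ofLp ⬝ᵥ (Aᵀ * A) *ᵥ x.ofLp := by
  rw [norm_sq_eq_dotProduct, ofLp_euclideanCLM, ← mulVec_mulVec, dotProduct_mulVec _ Aᵀ,
    vecMul_transpose]

theorem norm_adjoint_euclideanCLM_sq_add {k l n : ℕ} {A : Matrix (Fin k) (Fin n) ℝ}
    {B : Matrix (Fin l) (Fin k) ℝ} (hAB : A * Aᵀ + Bᵀ * B = 1) (y : EuclideanSpace ℝ (Fin k)) :
    ‖(euclideanCLM A).adjoint y‖ ^ 2 + ‖(euclideanCLM Bᵀ).adjoint y‖ ^ 2 = ‖y‖ ^ 2 := by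
  simp only [adjoint_euclideanCLM, norm_euclideanCLM_sq, transpose_transpose]
  rw [← dotProduct_add, ← add_mulVec, hAB, one_mulVec, norm_sq_eq_dotProduct]

theorem sum_mul_norm_euclideanCLM_sq_le {ι : Type*} [Fintype ι] {n : ℕ} {ni : ι → ℕ}
    {C : ∀ i, Matrix (Fin (ni i)) (Fin n) ℝ} {p : ι → ℝ}
    (h : (1 - ∑ i, p i • ((C i)ᵀ * C i)).PosSemidef) (x : EuclideanSpace ℝ (Fin n)) :
    ∑ i, p i * ‖euclideanCLM (C i) x‖ ^ 2 ≤ ‖x‖ ^ 2 := by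
  have hx := h.dotProduct_mulVec_nonneg x.ofLp
  simp only [star_trivial, sub_mulVec, one_mulVec, sum_mulVec, smul_mulVec, dotProduct_sub,
    dotProduct_sum, dotProduct_smul, smul_eq_mul] at hx
  simpa only [norm_euclideanCLM_sq, norm_sq_eq_dotProduct x] using sub_nonneg.1 hx

end Coordinates

theorem gaussian_geometric_brascamp_lieb_general {ι : Type*} [Fintype ι] {n : ℕ} {ni : ι → ℕ}
    (C : ∀ i, Matrix (Fin (ni i)) (Fin n) ℝ) (Q : ∀ i, Matrix (Fin (ni i)) (Fin (ni i)) ℝ)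
    (hCC : ∀ i, (1 - C i * (C i)ᵀ).PosSemidef) (hcomp : ∀ i, (1 - C i * (C i)ᵀ) * (Q i - 1) = 0)
    (p : ι → ℝ) (hp : ∀ i, 0 ≤ p i) (hsum : (1 - ∑ i, p i • ((C i)ᵀ * C i)).PosSemidef)
    (f : ∀ i, (Fin (ni i) → ℝ) → ℝ) (hfint : ∀ i, Integrable (f i) (stdGaussian (ni i)))
    (hflc : ∀ i, MoreLogConvex (f i) ((2 * Real.pi)⁻¹ • (Q i - 1))) :
    ∫⁻ x, ENNReal.ofReal (∏ i, f i (C i *ᵥ x) ^ p i) ∂stdGaussian n ≤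
      ∏ i, ENNReal.ofReal (∫ y, f i y ∂stdGaussian (ni i)) ^ p i := by
  choose B hBB hBQ using fun i => exists_transpose_mul_self_eq_of_mul_eq_zero (hCC i) (hcomp i)
  have hBv (i : ι) (z : Fin (ni i) → ℝ) : ((B i)ᵀ *ᵥ z) ᵥ* ((2 * Real.pi)⁻¹ • (Q i - 1)) = 0 := by
    rw [mulVec_transpose, vecMul_vecMul, Matrix.mul_smul, hBQ, smul_zero, vecMul_zero]
  simp_rw [← map_ofLp_stdGaussian] at hfint ⊢
  simp_rw [integral_map (WithLp.measurable_ofLp 2 _).aemeasurable (hfint _).aestronglyMeasurable,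
    ofReal_prod_rpow (fun i => (hflc i).nonneg _) hp]
  refine (lintegral_map_le _ _).trans <|
    lintegral_prod_rpow_comp_le (C := fun i => euclideanCLM (C i))
      (R := fun i => euclideanCLM (B i)ᵀ) (f := fun i y => f i y.ofLp)
      (fun i => norm_adjoint_euclideanCLM_sq_add (by rw [hBB, add_sub_cancel])) hp
      (sum_mul_norm_euclideanCLM_sq_le hsum) (fun i y => (hflc i).nonneg _)
      (fun i => (hfint i).comp_measurable (WithLp.measurable_ofLp 2 _))
      fun i y z => (hflc i).le_midpoint (hBv i z.ofLp) y.ofLp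

/-- The Gaussian form of the generalized geometric Brascamp–Lieb inequality. -/
theorem gaussian_geometric_brascamp_lieb
    {n m : ℕ} (hnm : n ≤ m) {ni : Fin m → ℕ}
    (hni_pos : ∀ i, 0 < ni i) (hni_le : ∀ i, ni i ≤ n)
    (C : ∀ i, Matrix (Fin (ni i)) (Fin n) ℝ)
    (Q : ∀ i, Matrix (Fin (ni i)) (Fin (ni i)) ℝ)
    (hCC : ∀ i, ((1 : Matrix (Fin (ni i)) (Fin (ni i)) ℝ) - C i * (C i)ᵀ).PosSemidef)
    (hQ1 : ∀ i, (Q i - 1).PosSemidef)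
    (hcomp : ∀ i, ((1 : Matrix (Fin (ni i)) (Fin (ni i)) ℝ) - C i * (C i)ᵀ) * (Q i - 1) = 0)
    (p : Fin m → ℝ) (hp : ∀ i, 0 < p i)
    (hsum : ∑ i, p i • ((C i)ᵀ * C i) = 1)
    (f : ∀ i, (Fin (ni i) → ℝ) → ℝ)
    (hf0 : ∀ i x, 0 ≤ f i x)
    (hfint : ∀ i, Integrable (f i) (stdGaussian (ni i)))
    (hflc : ∀ i, MoreLogConvex (f i) ((2 * Real.pi)⁻¹ • (Q i - 1))) :
    (∫⁻ x, ENNReal.ofReal (∏ i, f i ((C i).mulVec x) ^ p i) ∂ stdGaussian n) ≤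
      ∏ i, ENNReal.ofReal (∫ y, f i y ∂ stdGaussian (ni i)) ^ p i :=
  gaussian_geometric_brascamp_lieb_general C Q hCC hcomp p (fun i => (hp i).le)
    (by rw [hsum, sub_self]; exact .zero) f hfint hflc
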